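/- arXiv:1811.04188 — 3 statements merged into one kernel-verified Lean document; each statement's English description precedes it below -/
import Mathlib

section
/- Let ℓ ≥ 2, n ≥ 1, m ≥ 0 be integers and let Q(u₀,…,u_m; v₀,v₁,v₂) be a polynomial with constant complex coefficients that is homogeneous of total degree p in the variables (v₀,v₁,v₂), for some p ≥ 0. If Q(ζ(z), ζ'(z), …, ζ^{(m)}(z); Γ(z), Γ^{(n)}(z), Γ^{(ℓn)}(z)) = 0 for every z ∈ ℂ at which ζ and Γ are analytic, then Q is the identically zero polynomial. -/
namespace HVZ
open MvPolynomial

/-- Pointwise multiplication by a completely additive function. -/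
noncomputable def dmul (v : ℕ → ℂ) (f : ArithmeticFunction ℂ) : ArithmeticFunction ℂ :=
  ⟨fun n => v n * f n, by simp⟩

lemma dmul_apply (v : ℕ → ℂ) (f : ArithmeticFunction ℂ) (n : ℕ) : dmul v f n = v n * f n := rfl

lemma dmul_add (v : ℕ → ℂ) (f g : ArithmeticFunction ℂ) :
    dmul v (f + g) = dmul v f + dmul v g := by
  ext n; simp [dmul_apply, mul_add]

lemma dmul_mul (p : ℕ) [Fact p.Prime] (f g : ArithmeticFunction ℂ) :
    dmul (fun n => (padicValNat p n : ℂ)) (f * g) =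
      dmul (fun n => (padicValNat p n : ℂ)) f * g + f * dmul (fun n => (padicValNat p n : ℂ)) g := by
  ext n
  rw [dmul_apply, ArithmeticFunction.add_apply, ArithmeticFunction.mul_apply,
    ArithmeticFunction.mul_apply, ArithmeticFunction.mul_apply, ← Finset.sum_add_distrib,
    Finset.mul_sum]
  refine Finset.sum_congr rfl fun x hx => ?_
  rw [Nat.mem_divisorsAntidiagonal] at hx
  have h1 : x.1 ≠ 0 := fun h => hx.2 (by rw [← hx.1, h, zero_mul])
  have h2 : x.2 ≠ 0 := fun h => hx.2 (by rw [← hx.1, h, mul_zero])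
  rw [← hx.1, padicValNat.mul h1 h2, dmul_apply, dmul_apply]
  push_cast
  ring

lemma dmul_aeval {m : ℕ} (p : ℕ) [Fact p.Prime] (Z : Fin (m+1) → ArithmeticFunction ℂ)
    (P : MvPolynomial (Fin (m+1)) ℂ) :
    dmul (fun n => (padicValNat p n : ℂ)) (aeval Z P) =
      ∑ i, aeval Z (pderiv i P) * dmul (fun n => (padicValNat p n : ℂ)) (Z i) := by
  induction P using MvPolynomial.induction_on with
  | C a =>
    ext n
    simp only [algHom_C, dmul_apply, pderiv_C, map_zero, zero_mul, Finset.sum_const_zero,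
      ArithmeticFunction.zero_apply]
    rw [Algebra.algebraMap_eq_smul_one, ArithmeticFunction.smul_map, ArithmeticFunction.one_apply]
    by_cases h : n = 1 <;> simp [h]
  | add P Q hP hQ =>
    simp only [map_add, dmul_add, hP, hQ, add_mul, Finset.sum_add_distrib]
  | mul_X P j hP =>
    have : ∀ i, (aeval Z) ((pderiv i) (P * X j)) = aeval Z (pderiv i P) * Z j
        + (if i = j then aeval Z P else 0) := by
      intro i
      rw [Derivation.leibniz, pderiv_X]
      by_cases h : i = j
      · subst h; simp; ring
      · simp [h, Pi.single_apply, Ne.symm h]; ring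
    simp only [this, map_mul, aeval_X, dmul_mul, hP, add_mul, Finset.sum_add_distrib, ite_mul,
      zero_mul, Finset.sum_ite_eq', Finset.mem_univ, if_true, Finset.sum_mul]
    simp only [mul_assoc, mul_comm (Z j)]

/-- coefficients of the `i`-th derivative of zeta -/
noncomputable def Zf (i : ℕ) : ArithmeticFunction ℂ :=
  ⟨fun n => if n = 0 then 0 else (-(Real.log n : ℂ)) ^ i, by simp⟩

lemma Zf_apply (i n : ℕ) (hn : n ≠ 0) : Zf i n = (-(Real.log n : ℂ)) ^ i := by
  change (if n = 0 then 0 else (-(Real.log n : ℂ)) ^ i) = _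
  simp [hn]

lemma lead_zero {m : ℕ} (G : Fin (m+1) → ArithmeticFunction ℂ)
    (h : ∀ p : ℕ, ∀ _ : Fact p.Prime,
      ∑ i, G i * dmul (fun n => (padicValNat p n : ℂ)) (Zf i) = 0) : ∀ i, G i = 0 := by
  suffices H : ∀ N, ∀ i, G i N = 0 from fun i => by ext N; exact H N i
  intro N
  induction N using Nat.strong_induction_on with
  | _ N ih =>
  rcases Nat.eq_zero_or_pos N with rfl | hN
  · intro i; simp
  have key : ∀ p : ℕ, p.Prime → ∑ i, G i N * (-(Real.log p : ℂ)) ^ (i : ℕ) = 0 := by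
    intro p hp
    have := Fact.mk hp
    have h1 := congrArg (fun f : ArithmeticFunction ℂ => f (N * p)) (h p ⟨hp⟩)
    simp only [ArithmeticFunction.zero_apply] at h1
    rw [show (∑ i, G i * dmul (fun n => (padicValNat p n : ℂ)) (Zf i)) (N * p) =
      ∑ i, (G i * dmul (fun n => (padicValNat p n : ℂ)) (Zf i)) (N * p) from by
        induction (Finset.univ : Finset (Fin (m+1))) using Finset.induction_on with
        | empty => simp
        | insert a s ha ih' => rw [Finset.sum_insert ha, Finset.sum_insert ha,
            ArithmeticFunction.add_apply, ih']] at h1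
    rw [← h1]
    refine Finset.sum_congr rfl fun i _ => ?_
    rw [ArithmeticFunction.mul_apply, Finset.sum_eq_single (N, p)]
    · simp only [dmul_apply]
      rw [Zf_apply _ _ hp.ne_zero]; simp
    · rintro ⟨d, e⟩ hde hne
      rw [Nat.mem_divisorsAntidiagonal] at hde
      simp only at hde ⊢
      by_cases hpe : p ∣ e
      · obtain ⟨e', rfl⟩ := hpe
        have hN' : d * e' = N := by
          have := hde.1
          apply Nat.eq_of_mul_eq_mul_right hp.pos
          rw [← this]; ring
        have he' : e' ≠ 0 := by rintro rfl; simp at hN'; omega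
        have he1 : e' ≠ 1 := by
          rintro rfl
          apply hne
          simp at hN' ⊢; exact hN'
        have hd : d ≠ 0 := by rintro rfl; simp at hN'; omega
        have : d < N := by rw [← hN']; exact lt_mul_of_one_lt_right (Nat.pos_of_ne_zero hd) (by omega)
        rw [ih d this i, zero_mul]
      · rw [dmul_apply, padicValNat.eq_zero_of_not_dvd hpe]; simp
    · intro hh
      exfalso; apply hh
      rw [Nat.mem_divisorsAntidiagonal]
      exact ⟨rfl, by have := hp.pos; positivity⟩
  -- polynomial with infinitely many roots
  let R : Polynomial ℂ := ∑ i : Fin (m+1), Polynomial.C (G i N) * Polynomial.X ^ (i : ℕ)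
  have hR : R = 0 := by
    apply Polynomial.eq_zero_of_infinite_isRoot
    have : Set.Infinite ((fun p : ℕ => -(Real.log p : ℂ)) '' {p | p.Prime}) := by
      apply Set.Infinite.image _ Nat.infinite_setOfPred_prime
      intro a ha b hb hab
      simp only [neg_inj, Complex.ofReal_inj] at hab
      have := Real.log_injOn_pos (by simpa using (Nat.Prime.pos ha)) (by simpa using (Nat.Prime.pos hb)) hab
      exact_mod_cast this
    refine this.mono ?_
    rintro _ ⟨p, hp, rfl⟩
    change Polynomial.eval _ R = 0
    rw [← key p hp]
    simp [R, Polynomial.eval_finsetSum]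
  intro i
  have := congrArg (fun q => Polynomial.coeff q (i : ℕ)) hR
  simp only [R, Polynomial.finsetSum_coeff, Polynomial.coeff_C_mul, Polynomial.coeff_X_pow,
    Polynomial.coeff_zero] at this
  rw [Finset.sum_eq_single i] at this
  · simpa using this
  · intro b _ hb
    have : (i : ℕ) ≠ b := fun h => hb (Fin.ext h.symm)
    simp [this]
  · simp

theorem zeta_indep_aux {m : ℕ} (d : ℕ) : ∀ (P : MvPolynomial (Fin (m+1)) ℂ),
    (∀ s, coeff s P ≠ 0 → s.degree < d) → aeval (fun i : Fin (m+1) => Zf i) P = 0 → P = 0 := by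
  induction d with
  | zero =>
    intro P hP _
    ext s
    by_contra h
    exact absurd (hP s (by simpa using h)) (by simp)
  | succ d ih =>
    intro P hP h0
    have h1 : ∀ i, aeval (fun i : Fin (m+1) => Zf i) (pderiv i P) = 0 := by
      apply lead_zero
      intro p hp
      rw [← dmul_aeval, h0]
      ext n; simp [dmul_apply]
    have h2 : ∀ i, pderiv i P = 0 := by
      intro i
      refine ih _ ?_ (h1 i)
      intro s hs
      rw [coeff_pderiv] at hs
      have := hP _ (left_ne_zero_of_mul hs)
      simpa [Finsupp.degree_single] using this
    have h3 : ∀ s, s ≠ 0 → coeff s P = 0 := by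
      intro s hs
      obtain ⟨i, hi⟩ := Finsupp.ne_iff.mp hs
      have h4 := congrArg (coeff (s - Finsupp.single i 1)) (h2 i)
      rw [coeff_pderiv, coeff_zero] at h4
      have h5 : s - Finsupp.single i 1 + Finsupp.single i 1 = s := by
        apply tsub_add_cancel_of_le
        simp only [Finsupp.coe_zero, Pi.zero_apply] at hi
        simp; omega
      rw [h5] at h4
      rcases mul_eq_zero.mp h4 with h | h
      · exact h
      · exfalso; norm_cast at h
    have h6 : P = C (coeff 0 P) := by
      ext s
      rw [coeff_C]
      split_ifs with h
      · rw [h]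
      · exact h3 s (Ne.symm h)
    rw [h6, algHom_C] at h0
    have h7 := congrArg (fun f : ArithmeticFunction ℂ => f 1) h0
    simp [Algebra.algebraMap_eq_smul_one] at h7
    rw [h6, h7, C_0]

theorem zeta_indep {m : ℕ} (P : MvPolynomial (Fin (m+1)) ℂ)
    (h : aeval (fun i : Fin (m+1) => Zf i) P = 0) : P = 0 := by
  refine zeta_indep_aux (P.totalDegree + 1) P ?_ h
  intro s hs
  have := le_totalDegree (mem_support_iff.mpr hs)
  rw [Finsupp.degree_eq_sum, ← Finsupp.sum_fintype s (fun _ e => e) (by simp)]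
  exact Nat.lt_succ_of_le this

lemma abscissa_zeta : LSeries.abscissaOfAbsConv (1 : ℕ → ℂ) = 1 := LSeries.abscissaOfAbsConv_one

lemma logMul_iter (i : ℕ) (n : ℕ) : (LSeries.logMul^[i] (1 : ℕ → ℂ)) n = (Complex.log n) ^ i := by
  induction i with
  | zero => simp
  | succ i ih => rw [Function.iterate_succ_apply', LSeries.logMul, ih, pow_succ']

lemma Zf_L (i : ℕ) {s : ℂ} (hs : 1 < s.re) :
    LSeriesSummable (fun n => Zf i n) s ∧
      LSeries (fun n => Zf i n) s = iteratedDeriv i riemannZeta s := by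
  have hab : LSeries.abscissaOfAbsConv (1 : ℕ → ℂ) < s.re := by
    rw [LSeries.abscissaOfAbsConv_one]; exact_mod_cast hs
  have hc : ∀ {n : ℕ}, n ≠ 0 → Zf i n = ((-1 : ℂ)^i • (LSeries.logMul^[i] (1 : ℕ → ℂ))) n := by
    intro n hn
    rw [Zf_apply _ _ hn, Pi.smul_apply, logMul_iter, Complex.natCast_log, smul_eq_mul, ← mul_pow]
    ring
  have hsum : LSeriesSummable (LSeries.logMul^[i] (1 : ℕ → ℂ)) s := by
    apply LSeriesSummable_of_abscissaOfAbsConv_lt_re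
    rwa [LSeries.absicssaOfAbsConv_logPowMul]
  constructor
  · rw [LSeriesSummable_congr s hc]
    exact hsum.smul _
  · rw [LSeries_congr hc s, LSeries_smul, ← LSeries_iteratedDeriv i hab]
    apply Filter.EventuallyEq.iteratedDeriv_eq
    have : {z : ℂ | 1 < z.re} ∈ nhds s :=
      (isOpen_lt continuous_const Complex.continuous_re).mem_nhds hs
    filter_upwards [this] with z hz
    exact LSeries_one_eq_riemannZeta hz

lemma aeval_L {m : ℕ} (P : MvPolynomial (Fin (m+1)) ℂ) {s : ℂ} (hs : 1 < s.re) :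
    LSeriesSummable (fun n => aeval (fun i : Fin (m+1) => Zf i) P n) s ∧
      LSeries (fun n => aeval (fun i : Fin (m+1) => Zf i) P n) s =
        eval (fun i : Fin (m+1) => iteratedDeriv i riemannZeta s) P := by
  induction P using MvPolynomial.induction_on with
  | C a =>
    have hc : (fun n => (aeval (fun i : Fin (m+1) => Zf i) (C a : MvPolynomial (Fin (m+1)) ℂ)) n) =
        a • LSeries.delta := by
      ext n
      rw [algHom_C, Algebra.algebraMap_eq_smul_one, ArithmeticFunction.smul_map,
        ArithmeticFunction.one_apply]
      simp [LSeries.delta]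
    rw [hc]
    constructor
    · apply LSeriesSummable.smul
      refine summable_of_ne_finset_zero (s := {1}) ?_
      intro n hn
      simp only [Finset.mem_singleton] at hn
      simp [LSeries.term_delta, hn]
    · rw [LSeries_smul, LSeries_delta]; simp
  | add P Q hP hQ =>
    have : (fun n => (aeval (fun i : Fin (m+1) => Zf i) (P + Q)) n) =
      (fun n => (aeval (fun i : Fin (m+1) => Zf i) P) n) +
      (fun n => (aeval (fun i : Fin (m+1) => Zf i) Q) n) := by
      ext n; simp
    rw [this]
    refine ⟨hP.1.add hQ.1, ?_⟩
    rw [LSeries_add hP.1 hQ.1, hP.2, hQ.2, map_add]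
  | mul_X P j hP =>
    rw [map_mul, aeval_X]
    have hj := Zf_L j hs
    refine ⟨ArithmeticFunction.LSeriesSummable_mul hP.1 hj.1, ?_⟩
    rw [ArithmeticFunction.LSeries_mul' hP.1 hj.1, hP.2, hj.2, map_mul, eval_X]

end HVZ

namespace HVZ
open Filter Topology

lemma lead_rate (F : ArithmeticFunction ℂ) (hs : LSeriesSummable (fun n => F n) 2) (N : ℕ)
    (hN : N ≠ 0) (h : ∀ m < N, F m = 0) (K : ℕ) :
    Tendsto (fun k : ℕ => ((N : ℂ) ^ (k + 1) * LSeries (fun n => F n) ((k : ℂ) + 1) - F N)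
      * ((k : ℂ) + 1) ^ K) atTop (𝓝 0) := by
  let f : ℕ → ℂ := fun n => F n
  let g : ℕ → ℂ := Pi.single N (F N)
  have hN' : (N : ℂ) ≠ 0 := by exact_mod_cast hN
  have hg0 : ∀ s : ℂ, ∀ n ≠ N, LSeries.term g s n = 0 := by
    intro s n hn
    simp [LSeries.term, g, hn]
  have hgs : ∀ s, LSeriesSummable g s := by
    intro s
    refine summable_of_ne_finset_zero (s := {N}) fun n hn => hg0 s n (by simpa using hn)
  have hgL : ∀ s, LSeries g s = F N / (N : ℂ) ^ s := by
    intro s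
    rw [LSeries, tsum_eq_single N (hg0 s)]
    simp [LSeries.term, g, hN]
  have habs : LSeries.abscissaOfAbsConv (f - g) < ⊤ := by
    refine lt_of_le_of_lt (LSeriesSummable.abscissaOfAbsConv_le (hs.sub (hgs 2))) ?_
    exact EReal.coe_lt_top _
  have h1 : Tendsto (fun x : ℝ ↦ (N + 1 : ℂ) ^ (x : ℂ) * LSeries (f - g) x) atTop
      (𝓝 ((f - g) (N + 1))) := by
    apply LSeries.tendsto_cpow_mul_atTop _ habs
    intro m hm
    rcases lt_or_eq_of_le hm with hm | rfl
    · simp [f, g, h m hm, hm.ne]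
    · simp [f, g]
  have h2 : Tendsto (fun k : ℕ => (k : ℝ) + 1) atTop atTop :=
    tendsto_atTop_add_const_right _ _ tendsto_natCast_atTop_atTop
  have h3 := h1.comp h2
  have hr0 : (0 : ℝ) ≤ (N : ℝ) / (N + 1) := by positivity
  have hr1 : (N : ℝ) / (N + 1) < 1 := by rw [div_lt_one (by positivity)]; linarith
  have h4 := (tendsto_pow_const_mul_const_pow_of_abs_lt_one K (r := (N : ℝ) / (N + 1))
    (by rwa [abs_of_nonneg hr0])).comp (tendsto_add_atTop_nat 1)
  have h5 := (Complex.continuous_ofReal.tendsto 0).comp h4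
  have h6 := h3.mul h5
  rw [Complex.ofReal_zero, mul_zero] at h6
  refine h6.congr' ?_
  filter_upwards [eventually_ge_atTop 1] with k hk
  have hfs : LSeriesSummable f ((k : ℂ) + 1) := by
    refine hs.of_re_le_re ?_
    simp
    have : (1 : ℝ) ≤ k := by exact_mod_cast hk
    linarith
  have hL : LSeries f ((k : ℂ) + 1) = LSeries (f - g) ((k : ℂ) + 1) + F N / (N : ℂ) ^ (k + 1) := by
    rw [LSeries_sub hfs (hgs _), hgL]
    have : (N : ℂ) ^ ((k : ℂ) + 1) = (N : ℂ) ^ (k + 1) := by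
      rw [← Complex.cpow_natCast]; push_cast; rfl
    rw [this]; ring
  have hc : (N + 1 : ℂ) ^ (((k : ℝ) + 1 : ℝ) : ℂ) = (N + 1 : ℂ) ^ (k + 1) := by
    rw [← Complex.cpow_natCast]; push_cast; rfl
  have hN1 : (N + 1 : ℂ) ≠ 0 := by exact_mod_cast (Nat.succ_ne_zero N)
  change _ = ((N : ℂ) ^ (k + 1) * LSeries f ((k : ℂ) + 1) - F N) * ((k : ℂ) + 1) ^ K
  rw [hL]
  simp only [Function.comp_apply, hc]
  push_cast
  rw [div_pow]
  field_simp
  ring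

end HVZ

namespace HVZ
open Filter Topology Asymptotics

lemma dominance (S : Finset (ℕ × ℕ)) (d : ℕ × ℕ → ℂ) (e : ℕ × ℕ → ℕ → ℂ) (w Y : ℕ → ℂ)
    (hw : Tendsto (fun k => ‖w k‖) atTop atTop)
    (hwX : (fun k => w k * ((k : ℂ) + 1)⁻¹) =O[atTop] (fun _ => (1 : ℝ)))
    (hY : ∀ K : ℕ, Tendsto (fun k => Y k * w k ^ K) atTop (𝓝 0))
    (hY0 : ∀ᶠ k in atTop, Y k ≠ 0)
    (hXY : (fun k : ℕ => (((k : ℂ) + 1) * Y k)⁻¹) =O[atTop] (fun _ => (1 : ℝ)))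
    (he : ∀ ab ∈ S, ∀ K : ℕ, Tendsto (fun k => e ab k * ((k : ℂ) + 1) ^ K) atTop (𝓝 0))
    (h0 : ∀ᶠ k in atTop, ∑ ab ∈ S, (d ab + e ab k) * (w k ^ ab.1 * Y k ^ ab.2) = 0) :
    ∀ ab ∈ S, d ab = 0 := by
  classical
  by_contra! hne
  let T := S.filter (fun ab => d ab ≠ 0)
  have hT : T.Nonempty := by
    obtain ⟨ab, h1, h2⟩ := hne
    exact ⟨ab, Finset.mem_filter.mpr ⟨h1, h2⟩⟩
  obtain ⟨t1, ht1, hmin⟩ := T.exists_min_image (fun ab => ab.2) hT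
  let T' := T.filter (fun ab => ab.2 = t1.2)
  have hT' : T'.Nonempty := ⟨t1, Finset.mem_filter.mpr ⟨ht1, rfl⟩⟩
  obtain ⟨t, ht, hmax⟩ := T'.exists_max_image (fun ab => ab.1) hT'
  have htT := (Finset.mem_filter.mp ht).1
  have htS := (Finset.mem_filter.mp htT).1
  have htd := (Finset.mem_filter.mp htT).2
  have ht2 : t.2 = t1.2 := (Finset.mem_filter.mp ht).2
  have hw0 : ∀ᶠ k in atTop, w k ≠ 0 := by
    filter_upwards [hw.eventually_gt_atTop 0] with k hk
    exact norm_pos_iff.mp hk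
  have hwi : Tendsto (fun k => (w k)⁻¹) atTop (𝓝 0) := by
    rw [tendsto_zero_iff_norm_tendsto_zero]
    simp only [norm_inv]
    exact hw.inv_tendsto_atTop
  have hwiO : (fun k => (w k)⁻¹) =O[atTop] (fun _ => (1 : ℝ)) := hwi.isBigO_one ℝ
  have hYO : Y =O[atTop] (fun _ => (1 : ℝ)) := by
    have := (hY 0).isBigO_one ℝ
    simpa using this
  have hX0 : ∀ k : ℕ, ((k : ℂ) + 1) ≠ 0 := fun k => by exact_mod_cast Nat.succ_ne_zero k
  -- error part
  have hE : ∀ ab ∈ S, Tendsto (fun k => e ab k * (w k ^ ab.1 * Y k ^ ab.2)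
      * ((w k)⁻¹ ^ t.1 * (Y k)⁻¹ ^ t.2)) atTop (𝓝 0) := by
    intro ab hab
    have h1 := (isLittleO_one_iff ℝ).mpr (he ab hab (ab.1 + t.2))
    have h2 := h1.mul_isBigO ((((hwX.pow ab.1).mul (hYO.pow ab.2)).mul (hwiO.pow t.1)).mul
      (hXY.pow t.2))
    simp only [one_pow, mul_one] at h2
    refine ((isLittleO_one_iff ℝ).mp h2).congr fun k => ?_
    have := hX0 k
    simp only [mul_pow, mul_inv, pow_add, inv_pow]
    field_simp
  have hD : ∀ ab ∈ S, ab ≠ t → Tendsto (fun k => d ab * (w k ^ ab.1 * Y k ^ ab.2)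
      * ((w k)⁻¹ ^ t.1 * (Y k)⁻¹ ^ t.2)) atTop (𝓝 0) := by
    intro ab hab hne'
    by_cases hd : d ab = 0
    · simp [hd]
    have habT : ab ∈ T := Finset.mem_filter.mpr ⟨hab, hd⟩
    have hge : t.2 ≤ ab.2 := ht2 ▸ hmin ab habT
    rcases eq_or_lt_of_le hge with heq | hlt
    · have hle : ab.1 ≤ t.1 := hmax ab (Finset.mem_filter.mpr ⟨habT, by rw [← heq, ht2]⟩)
      have hlt : ab.1 < t.1 := lt_of_le_of_ne hle fun h => hne' (Prod.ext h heq.symm)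
      obtain ⟨c, hc⟩ := Nat.exists_eq_add_of_lt hlt
      have h1 : Tendsto (fun k => d ab * (w k)⁻¹ ^ (c + 1)) atTop (𝓝 0) := by
        have := (hwi.pow (c + 1)).const_mul (d ab)
        simpa using this
      refine h1.congr' ?_
      filter_upwards [hw0, hY0] with k hk1 hk2
      rw [hc, heq]
      simp only [pow_add, inv_pow, pow_one]
      field_simp
    · obtain ⟨c, hc⟩ := Nat.exists_eq_add_of_lt hlt
      have h1 := (isLittleO_one_iff ℝ).mpr (hY ab.1)
      have h2 := h1.mul_isBigO ((hYO.pow c).mul (hwiO.pow t.1))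
      simp only [one_pow, mul_one] at h2
      have h3 := ((isLittleO_one_iff ℝ).mp h2).const_mul (d ab)
      rw [mul_zero] at h3
      refine h3.congr' ?_
      filter_upwards [hw0, hY0] with k hk1 hk2
      rw [hc]
      simp only [pow_add, inv_pow, pow_one]
      field_simp
  have hlim : Tendsto (fun k => ∑ ab ∈ S, (d ab + e ab k) * (w k ^ ab.1 * Y k ^ ab.2)
      * ((w k)⁻¹ ^ t.1 * (Y k)⁻¹ ^ t.2)) atTop (𝓝 (∑ ab ∈ S, if ab = t then d t else 0)) := by
    apply tendsto_finsetSum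
    intro ab hab
    by_cases h : ab = t
    · subst h
      rw [if_pos rfl]
      have h1 := (hE _ hab).const_add (d ab)
      rw [add_zero] at h1
      refine h1.congr' ?_
      filter_upwards [hw0, hY0] with k hk1 hk2
      simp only [inv_pow]
      field_simp
    · rw [if_neg h]
      have h1 := (hD ab hab h).add (hE ab hab)
      rw [add_zero] at h1
      refine h1.congr fun k => ?_
      ring
  rw [Finset.sum_ite_eq' , if_pos htS] at hlim
  have hz : Tendsto (fun k => ∑ ab ∈ S, (d ab + e ab k) * (w k ^ ab.1 * Y k ^ ab.2)
      * ((w k)⁻¹ ^ t.1 * (Y k)⁻¹ ^ t.2)) atTop (𝓝 0) := by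
    refine tendsto_const_nhds.congr' ?_
    filter_upwards [h0] with k hk
    rw [← Finset.sum_mul, hk, zero_mul]
  exact htd (tendsto_nhds_unique hlim hz)

end HVZ

namespace HVZ
open Filter Topology Asymptotics

/-- Asymptotic behaviour of `s = ψ(k+1)` and `q = ψ'(k+1)`. -/
structure Asy (s q : ℕ → ℂ) : Prop where
  top : Tendsto (fun k => ‖s k‖) atTop atTop
  pow : ∀ K : ℕ, Tendsto (fun k : ℕ => s k ^ K * ((k : ℂ) + 1)⁻¹) atTop (𝓝 0)
  der : Tendsto (fun k : ℕ => ((k : ℂ) + 1) * q k) atTop (𝓝 1)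

/-- negligible sequences -/
def Neg (s e : ℕ → ℂ) : Prop :=
  ∀ K : ℕ, Tendsto (fun k : ℕ => e k * ((k : ℂ) + 1) * s k ^ K) atTop (𝓝 0)

lemma X_ne (k : ℕ) : ((k : ℂ) + 1) ≠ 0 := by exact_mod_cast Nat.succ_ne_zero k

lemma Neg.add {s e f : ℕ → ℂ} (he : Neg s e) (hf : Neg s f) : Neg s (fun k => e k + f k) := by
  intro K
  have := (he K).add (hf K)
  rw [add_zero] at this
  exact this.congr fun k => by ring

lemma Neg.zero (s : ℕ → ℂ) : Neg s (fun _ => 0) := by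
  intro K; simp

lemma Neg.sum {s : ℕ → ℂ} {ι : Type*} (t : Finset ι) (e : ι → ℕ → ℂ) (h : ∀ i ∈ t, Neg s (e i)) :
    Neg s (fun k => ∑ i ∈ t, e i k) := by
  classical
  induction t using Finset.induction_on with
  | empty => simpa using Neg.zero s
  | insert a t ha ih =>
    simp only [Finset.sum_insert ha]
    exact (h a (Finset.mem_insert_self _ _)).add (ih fun i hi => h i (Finset.mem_insert_of_mem hi))

lemma Neg.mul_bdd {s e b : ℕ → ℂ} (he : Neg s e) (hb : b =O[atTop] (fun _ => (1 : ℝ))) :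
    Neg s (fun k => e k * b k) := by
  intro K
  have := ((isLittleO_one_iff ℝ).mpr (he K)).mul_isBigO hb
  simp only [mul_one] at this
  exact ((isLittleO_one_iff ℝ).mp this).congr fun k => by ring

lemma Neg.mul_pow {s e : ℕ → ℂ} (he : Neg s e) (j : ℕ) : Neg s (fun k => e k * s k ^ j) := by
  intro K
  exact (he (j + K)).congr fun k => by ring

lemma Neg.congr' {s e f : ℕ → ℂ} (he : Neg s e) (h : e =ᶠ[atTop] f) : Neg s f := by
  intro K
  refine (he K).congr' ?_
  filter_upwards [h] with k hk
  rw [hk]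

lemma Neg.congr {s e f : ℕ → ℂ} (he : Neg s e) (h : ∀ k, e k = f k) : Neg s f :=
  he.congr' (Eventually.of_forall h)

lemma Asy.Xinv {s q : ℕ → ℂ} (A : Asy s q) : Tendsto (fun k : ℕ => ((k : ℂ) + 1)⁻¹) atTop (𝓝 0) := by
  simpa using A.pow 0

lemma Asy.ne {s q : ℕ → ℂ} (A : Asy s q) : ∀ᶠ k in atTop, s k ≠ 0 := by
  filter_upwards [A.top.eventually_gt_atTop 0] with k hk
  exact norm_pos_iff.mp hk

lemma Asy.sinv {s q : ℕ → ℂ} (A : Asy s q) : Tendsto (fun k => (s k)⁻¹) atTop (𝓝 0) := by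
  rw [tendsto_zero_iff_norm_tendsto_zero]
  simp only [norm_inv]
  exact A.top.inv_tendsto_atTop

lemma Asy.spow_q {s q : ℕ → ℂ} (A : Asy s q) (K : ℕ) : Tendsto (fun k => s k ^ K * q k) atTop (𝓝 0) := by
  have := (A.pow K).mul A.der
  rw [zero_mul] at this
  refine this.congr fun k => ?_
  have := X_ne k
  field_simp

lemma Asy.q0 {s q : ℕ → ℂ} (A : Asy s q) : Tendsto q atTop (𝓝 0) := by simpa using A.spow_q 0

lemma Asy.neg_qq {s q : ℕ → ℂ} (A : Asy s q) : Neg s (fun k => q k * q k) := by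
  intro K
  have := (A.spow_q K).mul A.der
  rw [zero_mul] at this
  exact this.congr fun k => by ring

lemma Asy.neg_tendsto {s q : ℕ → ℂ} (A : Asy s q) {e : ℕ → ℂ} (he : Neg s e) (K : ℕ) :
    Tendsto (fun k => e k * s k ^ K) atTop (𝓝 0) := by
  have := (he K).mul A.Xinv
  rw [zero_mul] at this
  refine this.congr fun k => ?_
  have := X_ne k
  field_simp

lemma Asy.neg_of_sq {s q : ℕ → ℂ} (A : Asy s q) {e : ℕ → ℂ}
    (he : (fun k : ℕ => ((k : ℂ) + 1) ^ 2 * e k) =O[atTop] (fun _ => (1 : ℝ))) : Neg s e := by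
  intro K
  have := ((isLittleO_one_iff ℝ).mpr (A.pow K)).mul_isBigO he
  simp only [mul_one] at this
  refine ((isLittleO_one_iff ℝ).mp this).congr fun k => ?_
  have := X_ne k
  field_simp

/-- `f = s^k (1 + c q / s^2) + negligible` -/
def Expn (s q : ℕ → ℂ) (f : ℕ → ℂ) (k : ℕ) (c : ℂ) : Prop :=
  Neg s (fun j => f j - s j ^ k * (1 + c * (q j * (s j)⁻¹ ^ 2)))

lemma Asy.r0 {s q : ℕ → ℂ} (A : Asy s q) : Tendsto (fun j => q j * (s j)⁻¹ ^ 2) atTop (𝓝 0) := by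
  simpa using A.q0.mul (A.sinv.pow 2)

lemma Asy.one_add {s q : ℕ → ℂ} (A : Asy s q) (c : ℂ) : (fun j => 1 + c * (q j * (s j)⁻¹ ^ 2)) =O[atTop] (fun _ => (1 : ℝ)) :=
  ((A.r0.const_mul c).const_add 1).isBigO_one ℝ

/-- negligible times anything with an expansion is negligible -/
lemma Asy.neg_mul {s q : ℕ → ℂ} (A : Asy s q) {e f : ℕ → ℂ} {k : ℕ} {c : ℂ} (he : Neg s e) (hf : Expn s q f k c) :
    Neg s (fun j => e j * f j) := by
  have hb := (A.neg_tendsto hf 0).isBigO_one ℝ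
  have h1 := (he.mul_pow k).mul_bdd (A.one_add c)
  have h2 := he.mul_bdd hb
  refine (h1.add h2).congr fun j => ?_
  simp only [pow_zero]
  ring

lemma Asy.expn_mul {s q : ℕ → ℂ} (A : Asy s q) {f g : ℕ → ℂ} {k l : ℕ} {c d : ℂ} (hf : Expn s q f k c)
    (hg : Expn s q g l d) : Expn s q (fun j => f j * g j) (k + l) (c + d) := by
  have h1 := A.neg_mul hf hg
  have h2 := (hg.mul_pow k).mul_bdd (A.one_add c)
  have hb : (fun j => c * d * (s j)⁻¹ ^ 4) =O[atTop] (fun _ => (1 : ℝ)) :=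
    ((A.sinv.pow 4).const_mul (c * d)).isBigO_one ℝ
  have h3 := (A.neg_qq.mul_pow (k + l)).mul_bdd hb
  refine ((h1.add h2).add h3).congr fun j => ?_
  ring

lemma Asy.expn_pow {s q : ℕ → ℂ} (A : Asy s q) {f : ℕ → ℂ} {k : ℕ} {c : ℂ} (hf : Expn s q f k c) (l : ℕ) :
    Expn s q (fun j => f j ^ l) (l * k) (l * c) := by
  induction l with
  | zero =>
    refine (Neg.zero s).congr fun j => ?_
    simp
  | succ l ih =>
    have := A.expn_mul ih hf
    simp only [← pow_succ] at this
    rw [show (l + 1) * k = l * k + k by ring,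
      show ((l + 1 : ℕ) : ℂ) * c = l * c + c by push_cast; ring]
    exact this

lemma Asy.expn_g {s q : ℕ → ℂ} (A : Asy s q) (ps g : ℕ → ℕ → ℂ) (h0 : ∀ j, ps 0 j = s j) (h1 : ∀ j, ps 1 j = q j)
    (h2 : ∀ i, 2 ≤ i → Neg s (ps i)) (g0 : ∀ j, g 0 j = 1)
    (gs : ∀ r j, g (r + 1) j = ∑ i ∈ Finset.range (r + 1), (r.choose i : ℂ) * ps i j * g (r - i) j)
    (r : ℕ) : Expn s q (g r) r (r.choose 2 : ℂ) := by
  induction r using Nat.strong_induction_on with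
  | _ r ih =>
  rcases r with _ | _ | r
  · refine (Neg.zero s).congr fun j => ?_
    simp [g0]
  · refine (Neg.zero s).congr fun j => ?_
    simp [gs, g0, h0]
  · -- g (r+2) = s g_{r+1} + (r+1) q g_r + ...
    have hrec : ∀ j, g (r + 1 + 1) j = s j * g (r + 1) j + (r + 1) * q j * g r j +
        ∑ i ∈ Finset.range r, ((r + 1).choose (i + 2) : ℂ) * (ps (i + 2) j * g (r - 1 - i) j) := by
      intro j
      rw [gs, Finset.sum_range_succ', Finset.sum_range_succ']
      simp only [h0, h1, Nat.choose_zero_right, Nat.choose_one_right, zero_add, Nat.sub_zero]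
      have : ∀ i, r + 1 - (i + 1 + 1) = r - 1 - i := fun i => by omega
      simp only [this, Nat.add_sub_cancel, mul_assoc]
      push_cast
      ring
    have e1 := (ih (r + 1) (by omega)).mul_pow 1
    have e2 := ((ih r (by omega)).mul_bdd (A.q0.isBigO_one ℝ)).mul_bdd
      (isBigO_const_const ((r : ℂ) + 1) (one_ne_zero (α := ℝ)) atTop)
    have e3 : Neg s (fun j => ∑ i ∈ Finset.range r,
        ((r + 1).choose (i + 2) : ℂ) * (ps (i + 2) j * g (r - 1 - i) j)) := by
      apply Neg.sum
      intro i hi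
      have := (A.neg_mul (h2 (i + 2) (by omega)) (ih (r - 1 - i) (by omega))).mul_bdd
        (isBigO_const_const (((r + 1).choose (i + 2) : ℂ)) (one_ne_zero (α := ℝ)) atTop)
      exact this.congr fun j => by ring
    have hb : (fun j => ((r : ℂ) + 1) * (r.choose 2 : ℂ) * (s j)⁻¹ ^ 2) =O[atTop]
        (fun _ => (1 : ℝ)) := ((A.sinv.pow 2).const_mul _).isBigO_one ℝ
    have e4 := (A.neg_qq.mul_pow r).mul_bdd hb
    refine (((e1.add e2).add e3).add e4).congr' ?_
    filter_upwards [A.ne] with j hj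
    rw [hrec]
    have hch : (((r + 1 + 1).choose 2 : ℕ) : ℂ) = ((r + 1).choose 2 : ℕ) + (r + 1) := by
      rw [Nat.choose_succ_succ' (r + 1) 1]; push_cast [Nat.choose_one_right]; ring
    rw [hch]
    have hs2 : s j ^ (r + 1 + 1) * (s j)⁻¹ ^ 2 = s j ^ r := by
      rw [pow_succ, pow_succ]; field_simp
    linear_combination (((r : ℂ) + 1) * q j) * hs2

lemma Asy.w_ratio {s q : ℕ → ℂ} (A : Asy s q) {w : ℕ → ℂ} {n : ℕ} {c : ℂ} (hw : Expn s q w n c) :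
    Tendsto (fun j => w j * (s j)⁻¹ ^ n) atTop (𝓝 1) := by
  have h1 := (A.neg_tendsto hw 0).mul (A.sinv.pow n |>.isBigO_one ℝ |> fun _ => A.sinv.pow n)
  have h2 := ((A.r0.const_mul c).const_add 1)
  have h3 := h1.add h2
  simp only [zero_mul, mul_zero, add_zero, zero_add] at h3
  refine h3.congr' ?_
  filter_upwards [A.ne] with j hj
  have : s j ^ n * (s j)⁻¹ ^ n = 1 := by rw [← mul_pow, mul_inv_cancel₀ hj, one_pow]
  linear_combination (-(1 + c * (q j * (s j)⁻¹ ^ 2))) * this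

lemma Asy.final {s q : ℕ → ℂ} (A : Asy s q) {w v : ℕ → ℂ} {n l : ℕ} {c d : ℂ} (hn : 1 ≤ n) (hl : 2 ≤ l)
    (hw : Expn s q w n c) (hv : Expn s q v (l * n) d) (hcd : d - l * c ≠ 0) :
    Tendsto (fun k => ‖w k‖) atTop atTop ∧
    ((fun k => w k * ((k : ℂ) + 1)⁻¹) =O[atTop] (fun _ => (1 : ℝ))) ∧
    (∀ K : ℕ, Tendsto (fun k => (v k - w k ^ l) * w k ^ K) atTop (𝓝 0)) ∧
    (∀ᶠ k in atTop, v k - w k ^ l ≠ 0) ∧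
    ((fun k : ℕ => (((k : ℂ) + 1) * (v k - w k ^ l))⁻¹) =O[atTop] (fun _ => (1 : ℝ))) := by
  have hr := A.w_ratio hw
  obtain ⟨M, hM⟩ : ∃ M, l * n = M + 2 := Nat.exists_eq_add_of_le' (by nlinarith)
  have hpn := A.expn_pow hw l
  rw [hM] at hv hpn
  -- Y = (d - l c) s^M q + negligible
  have hY : Neg s (fun k => (v k - w k ^ l) - (d - l * c) * s k ^ M * q k) := by
    have hm := hpn.mul_bdd (isBigO_const_const (-1 : ℂ) (one_ne_zero (α := ℝ)) atTop)
    refine (hv.add hm).congr' ?_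
    filter_upwards [A.ne] with j hj
    have hs2 : s j ^ (M + 2) * (s j)⁻¹ ^ 2 = s j ^ M := by
      rw [pow_succ, pow_succ]; field_simp
    linear_combination (-(d - l * c) * q j) * hs2
  have hYs : ∀ K : ℕ, Tendsto (fun k => (v k - w k ^ l) * s k ^ K) atTop (𝓝 0) := by
    intro K
    have h1 := (A.neg_tendsto hY K).add ((A.spow_q (M + K)).const_mul (d - l * c))
    simp only [mul_zero, add_zero] at h1
    exact h1.congr fun k => by ring
  have hwT : Tendsto (fun k => ‖w k‖) atTop atTop := by
    have h1 : Tendsto (fun k => ‖s k‖ ^ n) atTop atTop :=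
      (tendsto_pow_atTop (by omega)).comp A.top
    have h2 := h1.atTop_mul_pos (C := 1) one_pos (by simpa using hr.norm)
    refine h2.congr' ?_
    filter_upwards [A.ne] with j hj
    have : ‖s j‖ ≠ 0 := norm_ne_zero_iff.mpr hj
    have h3 : ‖s j‖ ^ n * ‖s j‖⁻¹ ^ n = 1 := by rw [← mul_pow, mul_inv_cancel₀ this, one_pow]
    rw [← inv_pow]
    linear_combination ‖w j‖ * h3
  have hXYlow : ∃ δ > 0, ∀ᶠ k : ℕ in atTop, δ ≤ ‖((k : ℂ) + 1) * (v k - w k ^ l)‖ := by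
    refine ⟨‖d - l * c‖ / 4, by positivity, ?_⟩
    have hpos : 0 < ‖d - l * c‖ := norm_pos_iff.mpr hcd
    have e1 := (hY 0).norm
    rw [norm_zero] at e1
    have e2 := A.der.norm
    rw [norm_one] at e2
    filter_upwards [e1.eventually_le_const (show (0 : ℝ) < ‖d - l * c‖ / 4 by positivity),
      e2.eventually_const_le (show (1 / 2 : ℝ) < 1 by norm_num),
      A.top.eventually_ge_atTop 1] with k h1 h2 h3
    have h4 : ((k : ℂ) + 1) * (v k - w k ^ l) =
      (d - l * c) * s k ^ M * (((k : ℂ) + 1) * q k) +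
      (v k - w k ^ l - (d - l * c) * s k ^ M * q k) * ((k : ℂ) + 1) * s k ^ 0 := by ring
    have h5 : ‖d - l * c‖ / 2 ≤ ‖(d - l * c) * s k ^ M * (((k : ℂ) + 1) * q k)‖ := by
      rw [norm_mul, norm_mul, norm_pow]
      have : 1 ≤ ‖s k‖ ^ M := one_le_pow₀ h3
      have h6 : ‖d - l * c‖ * 1 ≤ ‖d - l * c‖ * ‖s k‖ ^ M := by gcongr
      calc ‖d - l * c‖ / 2 = ‖d - l * c‖ * 1 * (1 / 2) := by ring
        _ ≤ _ := by gcongr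
    rw [h4]
    have := norm_sub_le_norm_add ((d - l * c) * s k ^ M * (((k : ℂ) + 1) * q k))
      ((v k - w k ^ l - (d - l * c) * s k ^ M * q k) * ((k : ℂ) + 1) * s k ^ 0)
    linarith
  obtain ⟨δ, hδ, hlow⟩ := hXYlow
  refine ⟨hwT, ?_, ?_, ?_, ?_⟩
  · have h1 := (A.pow n).mul hr
    rw [zero_mul] at h1
    refine Tendsto.isBigO_one ℝ (c := 0) (h1.congr' ?_)
    filter_upwards [A.ne] with j hj
    have : s j ^ n * (s j)⁻¹ ^ n = 1 := by rw [← mul_pow, mul_inv_cancel₀ hj, one_pow]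
    linear_combination (w j * ((j : ℂ) + 1)⁻¹) * this
  · intro K
    have h1 := (hYs (n * K)).mul (hr.pow K)
    rw [zero_mul] at h1
    refine h1.congr' ?_
    filter_upwards [A.ne] with j hj
    rw [mul_pow, ← pow_mul, inv_pow]
    field_simp
  · filter_upwards [hlow] with k hk h0
    rw [h0, mul_zero, norm_zero] at hk
    linarith
  · refine IsBigO.of_bound δ⁻¹ ?_
    filter_upwards [hlow] with k hk
    rw [norm_inv, norm_one, mul_one]
    exact inv_anti₀ hδ hk

end HVZ

namespace HVZ
open Filter Topology Asymptotics

lemma hasSum_tele (f : ℕ → ℝ) (hf : ∀ k, f (k + 1) ≤ f k) (h0 : Tendsto f atTop (𝓝 0)) :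
    HasSum (fun k => f k - f (k + 1)) (f 0) := by
  rw [hasSum_iff_tendsto_nat_of_nonneg (fun k => sub_nonneg.mpr (hf k))]
  simp only [Finset.sum_range_sub']
  simpa using h0.const_sub (f 0)

lemma tendsto_inv_add (x : ℝ) : Tendsto (fun k : ℕ => (x + k)⁻¹) atTop (𝓝 0) :=
  (tendsto_atTop_add_const_left _ x tendsto_natCast_atTop_atTop).inv_tendsto_atTop

lemma hasSum_inv_tele {x : ℝ} (hx : 0 < x) :
    HasSum (fun k : ℕ => (x + k)⁻¹ - (x + k + 1)⁻¹) x⁻¹ := by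
  have h := hasSum_tele (fun k : ℕ => (x + k)⁻¹) (fun k => by
    apply inv_anti₀ (by positivity); push_cast; linarith) (tendsto_inv_add x)
  simp only [Nat.cast_zero, add_zero] at h
  refine h.congr_fun ?_ |> fun h' => h'
  intro k; push_cast; ring_nf

/-- real digamma -/
noncomputable def psiR (x : ℝ) : ℝ := deriv (Real.log ∘ Real.Gamma) x

lemma gamma_diff {x : ℝ} (hx : 0 < x) : DifferentiableAt ℝ Real.Gamma x :=
  Real.differentiableAt_Gamma fun m => by
    have : (0 : ℝ) ≤ m := Nat.cast_nonneg m
    linarith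

lemma psiR_eq {x : ℝ} (hx : 0 < x) : psiR x = deriv Real.Gamma x / Real.Gamma x := by
  rw [psiR]
  exact ((gamma_diff hx).hasDerivAt.log (Real.Gamma_pos_of_pos hx).ne').deriv

lemma psiR_mono : MonotoneOn psiR (Set.Ioi 0) := by
  refine Real.convexOn_log_Gamma.monotoneOn_deriv ?_
  intro x hx
  exact ((gamma_diff hx).hasDerivAt.log (Real.Gamma_pos_of_pos hx).ne').differentiableAt

lemma ne_neg_nat {z : ℂ} (hz : 0 < z.re) (m : ℕ) : z ≠ -m := by
  rintro rfl
  simp at hz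
  have : (0 : ℝ) ≤ m := Nat.cast_nonneg m
  linarith

lemma psi_ofReal {x : ℝ} (hx : 0 < x) : Complex.digamma x = psiR x := by
  have h1 : HasDerivAt Complex.Gamma (deriv Complex.Gamma x) (x : ℂ) :=
    (Complex.differentiableAt_Gamma _ (ne_neg_nat (by simpa using hx))).hasDerivAt
  have h2 := h1.comp_ofReal
  have h3 := (gamma_diff hx).hasDerivAt.ofReal_comp
  have h4 : (fun y : ℝ => Complex.Gamma (y : ℂ)) = fun y : ℝ => ((Real.Gamma y : ℝ) : ℂ) := by
    ext y; exact Complex.Gamma_ofReal y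
  rw [h4] at h2
  have h5 := h2.unique h3
  rw [Complex.digamma_def, logDeriv_apply, h5, Complex.Gamma_ofReal, psiR_eq hx]
  push_cast; rfl

lemma psiR_add_one {x : ℝ} (hx : 0 < x) : psiR (x + 1) = psiR x + x⁻¹ := by
  have := Complex.digamma_apply_add_one (x : ℂ) (ne_neg_nat (by simpa using hx))
  rw [psi_ofReal hx, ← Complex.ofReal_one, ← Complex.ofReal_add, psi_ofReal (by linarith)] at this
  exact_mod_cast this

/-- candidate series -/
noncomputable def hR (x : ℝ) : ℝ := ∑' k : ℕ, (((k : ℝ) + 1)⁻¹ - (x + k)⁻¹)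

lemma sq_summable : Summable (fun k : ℕ => (((k : ℝ) + 1) ^ 2)⁻¹) := by
  have := (summable_nat_add_iff 1).mpr (Real.summable_nat_pow_inv.mpr (one_lt_two))
  simpa using this

lemma hR_summable {x : ℝ} (hx : 1 ≤ x) :
    Summable (fun k : ℕ => ((k : ℝ) + 1)⁻¹ - (x + k)⁻¹) := by
  refine Summable.of_nonneg_of_le (fun k => ?_) (fun k => ?_) (sq_summable.mul_left (x - 1))
  · exact sub_nonneg.mpr (inv_anti₀ (by positivity) (by linarith))
  · have hk : (0 : ℝ) ≤ k := Nat.cast_nonneg k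
    have h1 : ((k : ℝ) + 1)⁻¹ - (x + k)⁻¹ = (x - 1) * (((k : ℝ) + 1) * (x + k))⁻¹ := by
      have : x + k ≠ 0 := by positivity
      field_simp; ring
    rw [h1]
    refine mul_le_mul_of_nonneg_left (inv_anti₀ (by positivity) ?_) (by linarith)
    rw [sq]
    exact mul_le_mul_of_nonneg_left (by linarith) (by linarith)

lemma hR_mono {x y : ℝ} (hx : 1 ≤ x) (hxy : x ≤ y) : hR x ≤ hR y := by
  refine (hR_summable hx).tsum_le_tsum (fun k => ?_) (hR_summable (hx.trans hxy))
  have hk : (0 : ℝ) ≤ k := Nat.cast_nonneg k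
  have : (y + k)⁻¹ ≤ (x + k)⁻¹ := inv_anti₀ (by linarith) (by linarith)
  linarith

lemma hR_add_one {x : ℝ} (hx : 1 ≤ x) : hR (x + 1) = hR x + x⁻¹ := by
  have h1 := (hR_summable hx).hasSum.add (hasSum_inv_tele (show 0 < x by linarith))
  rw [hR, hR, ← h1.tsum_eq]
  congr 1; ext k; ring_nf

lemma diff_add_nat {x y : ℝ} (hx : 1 ≤ x) (hy : 1 ≤ y) (N : ℕ) :
    psiR (x + N) - hR (x + N) - (psiR (y + N) - hR (y + N)) =
      psiR x - hR x - (psiR y - hR y) := by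
  induction N with
  | zero => simp
  | succ N ih =>
    have hN : (0 : ℝ) ≤ N := Nat.cast_nonneg N
    rw [← ih]
    push_cast
    rw [← add_assoc, ← add_assoc, psiR_add_one (by linarith), psiR_add_one (by linarith),
      hR_add_one (by linarith), hR_add_one (by linarith)]
    ring

lemma diff_const {x y : ℝ} (hx : 1 ≤ x) (hxy : x ≤ y) (hyx : y ≤ x + 1) :
    psiR y - hR y = psiR x - hR x := by
  have key : ∀ N : ℕ, |psiR y - hR y - (psiR x - hR x)| ≤ (x + N)⁻¹ := by
    intro N
    have hN : (0 : ℝ) ≤ N := Nat.cast_nonneg N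
    rw [← diff_add_nat (hx.trans hxy) hx N]
    have a1 := hR_mono (x := x + N) (y := y + N) (by linarith) (by linarith)
    have a2 := hR_mono (x := y + N) (y := x + N + 1) (by linarith) (by linarith)
    rw [hR_add_one (by linarith)] at a2
    have b1 : psiR (x + N) ≤ psiR (y + N) :=
      psiR_mono (show 0 < x + N by linarith) (show 0 < y + N by linarith) (by linarith)
    have b2 : psiR (y + N) ≤ psiR (x + N + 1) :=
      psiR_mono (show 0 < y + N by linarith) (show 0 < x + N + 1 by linarith) (by linarith)
    rw [psiR_add_one (by linarith)] at b2
    rw [abs_le]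
    constructor <;> linarith
  have h0 : |psiR y - hR y - (psiR x - hR x)| ≤ 0 :=
    ge_of_tendsto' (tendsto_inv_add x) key
  have := abs_nonpos_iff.mp h0
  linarith

/-- complex version of the series -/
noncomputable def hC (z : ℂ) : ℂ := ∑' k : ℕ, (((k : ℂ) + 1)⁻¹ - (z + k)⁻¹)

lemma add_ne {z : ℂ} (hz : 1 < z.re) (k : ℕ) : z + k ≠ 0 := by
  intro h
  have := congrArg Complex.re h
  simp at this
  have hk : (0 : ℝ) ≤ k := Nat.cast_nonneg k
  linarith

lemma norm_add_ge {z : ℂ} (k : ℕ) : z.re + k ≤ ‖z + k‖ := by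
  have := Complex.re_le_norm (z + k)
  simpa using this

lemma hC_term_bound {z : ℂ} (hz : 1 < z.re) {R : ℝ} (hR : ‖z‖ < R) (k : ℕ) :
    ‖((k : ℂ) + 1)⁻¹ - (z + k)⁻¹‖ ≤ (R + 1) * (((k : ℝ) + 1) ^ 2)⁻¹ := by
  have hk : (0 : ℝ) ≤ k := Nat.cast_nonneg k
  have hk1 : (k : ℂ) + 1 ≠ 0 := by exact_mod_cast Nat.succ_ne_zero k
  have h1 : ((k : ℂ) + 1)⁻¹ - (z + k)⁻¹ = (z - 1) * (((k : ℂ) + 1) * (z + k))⁻¹ := by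
    have := add_ne hz k
    field_simp; ring
  rw [h1, norm_mul, norm_inv, norm_mul]
  have h2 : ‖z - 1‖ ≤ R + 1 := by
    have := norm_sub_le z 1
    rw [norm_one] at this; linarith
  have h3 : ‖(k : ℂ) + 1‖ = (k : ℝ) + 1 := by
    rw [show (k : ℂ) + 1 = ((k + 1 : ℕ) : ℂ) by push_cast; ring, Complex.norm_natCast]
    push_cast; ring
  have h4 := norm_add_ge (z := z) k
  rw [h3]
  refine mul_le_mul h2 (inv_anti₀ (by positivity) ?_) (by positivity) ((norm_nonneg _).trans h2)
  rw [sq]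
  exact mul_le_mul_of_nonneg_left (by linarith) (by linarith)

lemma hC_facts {z : ℂ} (hz : 1 < z.re) : DifferentiableAt ℂ hC z ∧
    HasSum (fun k : ℕ => ((z + k) ^ 2)⁻¹) (deriv hC z) := by
  let R := ‖z‖ + 1
  let U : Set ℂ := {w | 1 < w.re} ∩ {w | ‖w‖ < R}
  have hU : IsOpen U := (isOpen_lt continuous_const Complex.continuous_re).inter
    (isOpen_lt continuous_norm continuous_const)
  have hzU : z ∈ U := ⟨hz, by change ‖z‖ < ‖z‖ + 1; linarith⟩
  have hd : ∀ (k : ℕ), ∀ w ∈ U, HasDerivAt (fun w : ℂ => ((k : ℂ) + 1)⁻¹ - (w + k)⁻¹)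
      (((w + k) ^ 2)⁻¹) w := by
    intro k w hw
    have h1 : HasDerivAt (fun w : ℂ => w + k) 1 w := (hasDerivAt_id w).add_const _
    have h2 := (h1.inv (add_ne hw.1 k)).const_sub (((k : ℂ) + 1)⁻¹)
    convert! h2 using 1
    rw [neg_div, neg_neg, one_div]
  have hdo : ∀ k : ℕ, DifferentiableOn ℂ (fun w : ℂ => ((k : ℂ) + 1)⁻¹ - (w + k)⁻¹) U :=
    fun k w hw => (hd k w hw).differentiableAt.differentiableWithinAt
  have hb : ∀ (k : ℕ), ∀ w ∈ U, ‖((k : ℂ) + 1)⁻¹ - (w + k)⁻¹‖ ≤ (R + 1) * (((k : ℝ) + 1) ^ 2)⁻¹ :=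
    fun k w hw => hC_term_bound hw.1 hw.2 k
  have hsum := sq_summable.mul_left (R + 1)
  constructor
  · exact (Complex.differentiableOn_tsum_of_summable_norm hsum hdo hU hb).differentiableAt
      (hU.mem_nhds hzU)
  · have := Complex.hasSum_deriv_of_summable_norm hsum hdo hU hb hzU
    simp only [(hd _ z hzU).deriv] at this
    exact this

lemma hC_ofReal (x : ℝ) : hC x = hR x := by
  rw [hC, hR, Complex.ofReal_tsum]
  congr 1; ext k; push_cast; rfl

lemma psi_diff {z : ℂ} (hz : 0 < z.re) : DifferentiableAt ℂ Complex.digamma z := by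
  have hU : IsOpen {w : ℂ | 0 < w.re} := isOpen_lt continuous_const Complex.continuous_re
  have h1 : DifferentiableOn ℂ Complex.Gamma {w : ℂ | 0 < w.re} := fun w hw =>
    (Complex.differentiableAt_Gamma w (ne_neg_nat hw)).differentiableWithinAt
  have h2 := (h1.deriv hU).differentiableAt (hU.mem_nhds hz)
  have h3 := h1.differentiableAt (hU.mem_nhds hz)
  exact h2.div h3 (Complex.Gamma_ne_zero (ne_neg_nat hz))

lemma psi_eq_hC : ∃ c : ℂ, ∀ z : ℂ, 1 < z.re → Complex.digamma z = hC z + c := by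
  refine ⟨((psiR 2 - hR 2 : ℝ) : ℂ), ?_⟩
  let V : Set ℂ := {w | 1 < w.re}
  have hV : IsOpen V := isOpen_lt continuous_const Complex.continuous_re
  have h1 : AnalyticOnNhd ℂ Complex.digamma V := by
    apply DifferentiableOn.analyticOnNhd _ hV
    intro w hw
    have hw' : 1 < w.re := hw
    exact (psi_diff (by linarith)).differentiableWithinAt
  have h2 : AnalyticOnNhd ℂ (fun z => hC z + ((psiR 2 - hR 2 : ℝ) : ℂ)) V := by
    apply DifferentiableOn.analyticOnNhd _ hV
    intro w hw
    exact ((hC_facts hw).1.add_const _).differentiableWithinAt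
  have hconn : IsPreconnected V := (convex_halfSpace_re_gt 1).isPreconnected
  have h3 : ∃ᶠ z in 𝓝[≠] (2 : ℂ), Complex.digamma z = hC z + ((psiR 2 - hR 2 : ℝ) : ℂ) := by
    have ht : Tendsto (fun k : ℕ => ((2 + 1 / ((k : ℝ) + 1) : ℝ) : ℂ)) atTop (𝓝[≠] (2 : ℂ)) := by
      refine tendsto_nhdsWithin_iff.mpr ⟨?_, Eventually.of_forall fun k => ?_⟩
      · have := (Complex.continuous_ofReal.tendsto _).comp
          (tendsto_one_div_add_atTop_nhds_zero_nat.const_add (2 : ℝ))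
        simpa [Function.comp_def] using this
      · simp only [Set.mem_compl_iff, Set.mem_singleton_iff]
        intro h
        have h' : (2 + 1 / ((k : ℝ) + 1) : ℝ) = 2 := by exact_mod_cast h
        have : 0 < 1 / ((k : ℝ) + 1) := by positivity
        linarith
    refine ht.frequently (Frequently.of_forall fun k => ?_)
    have hp : 0 < 1 / ((k : ℝ) + 1) := by positivity
    have hp1 : 1 / ((k : ℝ) + 1) ≤ 1 := by
      rw [div_le_one (by positivity)]
      have hk : (0 : ℝ) ≤ k := Nat.cast_nonneg k
      linarith
    rw [psi_ofReal (by linarith), hC_ofReal]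
    have := diff_const (x := 2) (y := 2 + 1 / ((k : ℝ) + 1)) (by norm_num) (by linarith) (by linarith)
    rw [← this]
    push_cast; ring
  intro z hz
  exact h1.eqOn_of_preconnected_of_frequently_eq h2 hconn (show (1 : ℝ) < (2 : ℂ).re by simp) h3 hz

lemma deriv_psi {z : ℂ} (hz : 1 < z.re) :
    HasSum (fun k : ℕ => ((z + k) ^ 2)⁻¹) (deriv Complex.digamma z) := by
  obtain ⟨c, hc⟩ := psi_eq_hC
  have hV : {w : ℂ | 1 < w.re} ∈ 𝓝 z :=
    (isOpen_lt continuous_const Complex.continuous_re).mem_nhds hz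
  have : Complex.digamma =ᶠ[𝓝 z] fun w => hC w + c := by
    filter_upwards [hV] with w hw using hc w hw
  rw [this.deriv_eq, deriv_add_const]
  exact (hC_facts hz).2

lemma sq_term_le {x : ℝ} (hx : 1 < x) (k : ℕ) :
    ((x + k) ^ 2)⁻¹ ≤ (x - 1 + k)⁻¹ - (x - 1 + k + 1)⁻¹ := by
  have hk : (0 : ℝ) ≤ k := Nat.cast_nonneg k
  have h1 : 0 < x - 1 + k := by linarith
  have h2 : (x - 1 + k)⁻¹ - (x - 1 + k + 1)⁻¹ = ((x - 1 + k) * (x + k))⁻¹ := by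
    have h3 : x - 1 + k + 1 = x + k := by ring
    have h4 : x + k ≠ 0 := by positivity
    rw [h3]
    have := h1.ne'
    field_simp
    ring
  rw [h2]
  refine inv_anti₀ (by positivity) ?_
  rw [sq]
  exact mul_le_mul_of_nonneg_right (by linarith) (by linarith)

lemma norm_deriv_psi {z : ℂ} (hz : 1 < z.re) : ‖deriv Complex.digamma z‖ ≤ (z.re - 1)⁻¹ := by
  have h1 := deriv_psi hz
  have h2 := hasSum_inv_tele (show 0 < z.re - 1 by linarith)
  rw [← h1.tsum_eq]
  refine tsum_of_norm_bounded h2 fun k => ?_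
  refine le_trans ?_ (sq_term_le hz k)
  rw [norm_inv, norm_pow]
  have hk : (0 : ℝ) ≤ k := Nat.cast_nonneg k
  refine inv_anti₀ (by positivity) ?_
  exact pow_le_pow_left₀ (by linarith) (norm_add_ge k) 2

lemma deriv_psi_real {x : ℝ} (hx : 1 < x) : ∃ q : ℝ, deriv Complex.digamma x = q ∧
    x⁻¹ ≤ q ∧ q ≤ (x - 1)⁻¹ := by
  have h1 := deriv_psi (z := x) (by simpa using hx)
  have h2 := hasSum_inv_tele (show 0 < x - 1 by linarith)
  have h3 := hasSum_inv_tele (show 0 < x by linarith)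
  have hs : Summable fun k : ℕ => ((x + k) ^ 2)⁻¹ :=
    Summable.of_nonneg_of_le (fun k => by positivity) (sq_term_le hx) h2.summable
  refine ⟨∑' k : ℕ, ((x + k) ^ 2)⁻¹, ?_, ?_, ?_⟩
  · rw [← h1.tsum_eq, Complex.ofReal_tsum]
    congr 1; ext k; push_cast; rfl
  · refine hasSum_le (fun k => ?_) h3 hs.hasSum
    have hk : (0 : ℝ) ≤ k := Nat.cast_nonneg k
    have h4 : (x + k)⁻¹ - (x + k + 1)⁻¹ = ((x + k) * (x + k + 1))⁻¹ := by
      have h4 : x + k ≠ 0 := by positivity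
      have h5 : x + k + 1 ≠ 0 := by positivity
      field_simp; ring
    rw [h4]
    refine inv_anti₀ (by positivity) ?_
    rw [sq]
    exact mul_le_mul_of_nonneg_left (by linarith) (by linarith)
  · exact hasSum_le (sq_term_le hx) hs.hasSum h2

lemma higher_psi (i : ℕ) (hi : 1 ≤ i) :
    (fun k : ℕ => ((k : ℂ) + 1) ^ 2 * iteratedDeriv (i + 1) Complex.digamma ((k : ℂ) + 1))
      =O[atTop] (fun _ => (1 : ℝ)) := by
  refine IsBigO.of_bound (8 * (i.factorial : ℝ)) ?_
  filter_upwards [eventually_ge_atTop 4] with k hk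
  set x : ℝ := (k : ℝ) + 1 with hx
  have hk' : (4 : ℝ) ≤ k := by exact_mod_cast hk
  have hx5 : 5 ≤ x := by linarith
  have hxC : ((k : ℂ) + 1) = (x : ℂ) := by rw [hx]; push_cast; rfl
  have hball : ∀ z ∈ Metric.closedBall (x : ℂ) (x / 2), x / 2 ≤ z.re := by
    intro z hz
    rw [Metric.mem_closedBall, dist_eq_norm] at hz
    have := (abs_le.mp ((Complex.abs_re_le_norm _).trans hz)).1
    simp at this
    linarith
  have hV : IsOpen {w : ℂ | 1 < w.re} := isOpen_lt continuous_const Complex.continuous_re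
  have hdiff : DifferentiableOn ℂ (deriv Complex.digamma) {w : ℂ | 1 < w.re} := by
    apply DifferentiableOn.deriv _ hV
    intro w hw
    have hw' : 1 < w.re := hw
    exact (psi_diff (by linarith)).differentiableWithinAt
  have hdc : DiffContOnCl ℂ (deriv Complex.digamma) (Metric.ball (x : ℂ) (x / 2)) := by
    apply DifferentiableOn.diffContOnCl
    refine hdiff.mono ?_
    rw [closure_ball _ (by positivity)]
    intro z hz
    have := hball z hz
    change 1 < z.re
    linarith
  have hC : ∀ z ∈ Metric.sphere (x : ℂ) (x / 2), ‖deriv Complex.digamma z‖ ≤ (x / 4)⁻¹ := by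
    intro z hz
    have h1 := hball z (Metric.sphere_subset_closedBall hz)
    refine (norm_deriv_psi (by linarith)).trans (inv_anti₀ (by linarith) (by linarith))
  have hmain := Complex.norm_iteratedDeriv_le_of_forall_mem_sphere_norm_le i
    (show 0 < x / 2 by linarith) hdc hC
  rw [hxC, norm_mul, iteratedDeriv_succ', norm_pow, Complex.norm_real, Real.norm_of_nonneg (by linarith)]
  have hpow : x / 2 ≤ (x / 2) ^ i := le_self_pow₀ (by linarith) (by omega)
  have h0 : 0 < x := by linarith
  calc x ^ 2 * ‖iteratedDeriv i (deriv Complex.digamma) (x : ℂ)‖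
      ≤ x ^ 2 * (i.factorial * (x / 4)⁻¹ / (x / 2) ^ i) := by gcongr
    _ ≤ x ^ 2 * (i.factorial * (x / 4)⁻¹ / (x / 2)) := by gcongr
    _ = 8 * (i.factorial : ℝ) * ‖(1 : ℝ)‖ := by
      rw [norm_one]; field_simp; ring

lemma psi_nat (k : ℕ) : Complex.digamma ((k : ℂ) + 1) =
    ((-Real.eulerMascheroniConstant + (harmonic k : ℝ) : ℝ) : ℂ) := by
  rw [Complex.digamma_def, logDeriv_apply, Complex.deriv_Gamma_nat, Complex.Gamma_nat_eq_factorial]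
  have : ((k.factorial : ℕ) : ℂ) ≠ 0 := by exact_mod_cast Nat.factorial_ne_zero k
  rw [mul_div_cancel_left₀ _ this]
  push_cast; rfl

lemma log_top : Tendsto (fun k : ℕ => Real.log ((k : ℝ) + 1)) atTop atTop :=
  Real.tendsto_log_atTop.comp (tendsto_atTop_add_const_right _ _ tendsto_natCast_atTop_atTop)

lemma psi_top : Tendsto (fun k : ℕ => ‖Complex.digamma ((k : ℂ) + 1)‖) atTop atTop := by
  refine tendsto_atTop_mono (fun k => ?_)
    (tendsto_atTop_add_const_left _ (-Real.eulerMascheroniConstant) log_top)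
  rw [psi_nat, Complex.norm_real]
  refine le_trans ?_ (le_abs_self _)
  have := log_add_one_le_harmonic k
  push_cast at this
  linarith

lemma psi_log : (fun k : ℕ => Complex.digamma ((k : ℂ) + 1)) =O[atTop]
    (fun k : ℕ => Real.log ((k : ℝ) + 1)) := by
  refine IsBigO.of_bound (|Real.eulerMascheroniConstant| + 2) ?_
  filter_upwards [log_top.eventually_ge_atTop 1, eventually_ge_atTop 1] with k hk hk1
  rw [psi_nat, Complex.norm_real, Real.norm_eq_abs, Real.norm_eq_abs, abs_of_nonneg (by linarith : 0 ≤ Real.log ((k : ℝ) + 1))]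
  have h1 := harmonic_le_one_add_log k
  have h2 := log_add_one_le_harmonic k
  push_cast at h2
  have h3 : Real.log k ≤ Real.log ((k : ℝ) + 1) :=
    Real.log_le_log (by exact_mod_cast hk1) (by linarith)
  have h4 := abs_add_le (-Real.eulerMascheroniConstant) (harmonic k : ℝ)
  rw [abs_neg, abs_of_nonneg (show (0 : ℝ) ≤ harmonic k by linarith)] at h4
  have h5 : 0 ≤ |Real.eulerMascheroniConstant| := abs_nonneg _
  nlinarith

lemma psi_pow (K : ℕ) : Tendsto (fun k : ℕ => Complex.digamma ((k : ℂ) + 1) ^ K * ((k : ℂ) + 1)⁻¹)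
    atTop (𝓝 0) := by
  have h1 : (fun x : ℝ => Real.log x ^ K) =o[atTop] (fun x => x) := by
    simpa [Function.id_def] using Real.isLittleO_pow_log_id_atTop (n := K)
  have h2 : Tendsto (fun k : ℕ => (k : ℝ) + 1) atTop atTop :=
    tendsto_atTop_add_const_right _ _ tendsto_natCast_atTop_atTop
  have h3 := (psi_log.pow K).trans_isLittleO (h1.comp_tendsto h2)
  have h4 : (fun k : ℕ => Complex.digamma ((k : ℂ) + 1) ^ K) =o[atTop]
      (fun k : ℕ => ((k : ℂ) + 1)) := by
    refine h3.trans_isBigO (IsBigO.of_bound 1 (Eventually.of_forall fun k => ?_))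
    have : ((k : ℂ) + 1) = (((k : ℝ) + 1 : ℝ) : ℂ) := by push_cast; rfl
    rw [this, Complex.norm_real, one_mul]
    rfl
  have h5 := h4.tendsto_div_nhds_zero
  simpa [div_eq_mul_inv] using h5

lemma psi_der : Tendsto (fun k : ℕ => ((k : ℂ) + 1) * deriv Complex.digamma ((k : ℂ) + 1))
    atTop (𝓝 1) := by
  have hex : ∀ k : ℕ, ∃ q : ℝ, 1 ≤ k → deriv Complex.digamma ((k : ℂ) + 1) = q ∧
      ((k : ℝ) + 1)⁻¹ ≤ q ∧ q ≤ (k : ℝ)⁻¹ := by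
    intro k
    by_cases hk : 1 ≤ k
    · have hk' : (1 : ℝ) ≤ k := by exact_mod_cast hk
      obtain ⟨q, h1, h2, h3⟩ := deriv_psi_real (x := (k : ℝ) + 1) (by linarith)
      refine ⟨q, fun _ => ⟨?_, h2, by simpa using h3⟩⟩
      rw [← h1]; push_cast; rfl
    · exact ⟨0, fun h => absurd h hk⟩
  choose q hq using hex
  have h1 : Tendsto (fun k : ℕ => ((k : ℝ) + 1) * q k) atTop (𝓝 1) := by
    have hu : Tendsto (fun k : ℕ => 1 + (k : ℝ)⁻¹) atTop (𝓝 1) := by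
      simpa using (tendsto_inv_atTop_nhds_zero_nat (𝕜 := ℝ)).const_add 1
    refine tendsto_of_tendsto_of_tendsto_of_le_of_le' tendsto_const_nhds hu ?_ ?_
    · filter_upwards [eventually_ge_atTop 1] with k hk
      obtain ⟨-, h2, -⟩ := hq k hk
      have hp : 0 < (k : ℝ) + 1 := by positivity
      calc (1 : ℝ) = ((k : ℝ) + 1) * ((k : ℝ) + 1)⁻¹ := by field_simp
        _ ≤ _ := by gcongr
    · filter_upwards [eventually_ge_atTop 1] with k hk
      obtain ⟨-, -, h3⟩ := hq k hk
      have hp : 0 < (k : ℝ) := by exact_mod_cast hk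
      calc ((k : ℝ) + 1) * q k ≤ ((k : ℝ) + 1) * (k : ℝ)⁻¹ := by gcongr
        _ = 1 + (k : ℝ)⁻¹ := by field_simp
  have h2 := (Complex.continuous_ofReal.tendsto _).comp h1
  rw [Complex.ofReal_one] at h2
  refine h2.congr' ?_
  filter_upwards [eventually_ge_atTop 1] with k hk
  rw [(hq k hk).1]
  simp

lemma gamma_rec (r k : ℕ) :
    iteratedDeriv (r + 1) Complex.Gamma ((k : ℂ) + 1) / Complex.Gamma ((k : ℂ) + 1) =
    ∑ i ∈ Finset.range (r + 1), (r.choose i : ℂ) * iteratedDeriv i Complex.digamma ((k : ℂ) + 1) *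
      (iteratedDeriv (r - i) Complex.Gamma ((k : ℂ) + 1) / Complex.Gamma ((k : ℂ) + 1)) := by
  have hU : IsOpen {w : ℂ | 0 < w.re} := isOpen_lt continuous_const Complex.continuous_re
  have hx : (0 : ℝ) < ((k : ℂ) + 1).re := by
    simp; positivity
  have hnh := hU.mem_nhds (show ((k : ℂ) + 1) ∈ {w : ℂ | 0 < w.re} from hx)
  have h1 : AnalyticAt ℂ Complex.Gamma ((k : ℂ) + 1) :=
    DifferentiableOn.analyticAt (s := {w : ℂ | 0 < w.re}) (fun w hw =>
      (Complex.differentiableAt_Gamma w (ne_neg_nat hw)).differentiableWithinAt) hnh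
  have h2 : AnalyticAt ℂ Complex.digamma ((k : ℂ) + 1) :=
    DifferentiableOn.analyticAt (s := {w : ℂ | 0 < w.re}) (fun w hw =>
      (psi_diff hw).differentiableWithinAt) hnh
  have h3 : deriv Complex.Gamma =ᶠ[𝓝 ((k : ℂ) + 1)] Complex.digamma * Complex.Gamma := by
    filter_upwards [hnh] with w hw
    rw [Pi.mul_apply, Complex.digamma_def, logDeriv_apply,
      div_mul_cancel₀ _ (Complex.Gamma_ne_zero (ne_neg_nat hw))]
  rw [iteratedDeriv_succ', h3.iteratedDeriv_eq, iteratedDeriv_mul h2.contDiffAt h1.contDiffAt,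
    Finset.sum_div]
  refine Finset.sum_congr rfl fun i _ => ?_
  ring

end HVZ


namespace HVZ
open Filter Topology Asymptotics MvPolynomial

lemma eval_homog {m p : ℕ} (Q : MvPolynomial (Fin (m + 1) ⊕ Fin 3) ℂ)
    (hhom : Q.IsWeightedHomogeneous
      (Sum.elim (fun _ : Fin (m + 1) => (0 : ℕ)) (fun _ : Fin 3 => (1 : ℕ))) p)
    (u : Fin (m + 1) → ℂ) (v : Fin 3 → ℂ) (t : ℂ) :
    eval (Sum.elim u (fun j => t * v j)) Q = t ^ p * eval (Sum.elim u v) Q := by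
  rw [eval_eq', eval_eq', Finset.mul_sum]
  refine Finset.sum_congr rfl fun d hd => ?_
  have hw := hhom (mem_support_iff.mp hd)
  rw [Finsupp.weight_apply, Finsupp.sum_fintype _ _ (by simp), Fintype.sum_sum_type] at hw
  simp only [Sum.elim_inl, Sum.elim_inr, smul_eq_mul, mul_zero, Finset.sum_const_zero, zero_add,
    mul_one] at hw
  simp only [Fintype.prod_sum_type, Sum.elim_inl, Sum.elim_inr, mul_pow, Finset.prod_mul_distrib,
    Finset.prod_pow_eq_pow_sum, hw]
  ring

/-- the polynomial `Q(u; 1, w, y + w^ℓ)` -/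
noncomputable def polyR {m : ℕ} (ℓ : ℕ) (Q : MvPolynomial (Fin (m + 1) ⊕ Fin 3) ℂ) :
    Polynomial (Polynomial (MvPolynomial (Fin (m + 1)) ℂ)) :=
  eval₂ ((Polynomial.C.comp Polynomial.C).comp C)
    (Sum.elim (fun i => Polynomial.C (Polynomial.C (X i)))
      ![1, Polynomial.C Polynomial.X, Polynomial.X + Polynomial.C Polynomial.X ^ ℓ]) Q

/-- coefficients of `polyR` -/
noncomputable def cf {m : ℕ} (ℓ : ℕ) (Q : MvPolynomial (Fin (m + 1) ⊕ Fin 3) ℂ) (ab : ℕ × ℕ) :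
    MvPolynomial (Fin (m + 1)) ℂ := ((polyR ℓ Q).coeff ab.2).coeff ab.1

lemma polyR_eval {m : ℕ} (ℓ : ℕ) (Q : MvPolynomial (Fin (m + 1) ⊕ Fin 3) ℂ) :
    ∃ S : Finset (ℕ × ℕ), ∀ (u : Fin (m + 1) → ℂ) (w y : ℂ),
      eval (Sum.elim u ![1, w, y + w ^ ℓ]) Q =
        ∑ ab ∈ S, eval u (cf ℓ Q ab) * (w ^ ab.1 * y ^ ab.2) := by
  classical
  let B := (polyR ℓ Q).natDegree + 1
  let A := (Finset.range B).sup (fun b => ((polyR ℓ Q).coeff b).natDegree) + 1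
  refine ⟨Finset.range A ×ˢ Finset.range B, fun u w y => ?_⟩
  let φ : Polynomial (Polynomial (MvPolynomial (Fin (m + 1)) ℂ)) →+* ℂ :=
    Polynomial.eval₂RingHom (Polynomial.eval₂RingHom (eval u) w) y
  have h1 : φ (polyR ℓ Q) = eval (Sum.elim u ![1, w, y + w ^ ℓ]) Q := by
    refine (eval₂_comp_left (S₁ := Polynomial (Polynomial (MvPolynomial (Fin (m + 1)) ℂ)))
      (S₂ := ℂ) φ _ _ Q).trans ?_
    rw [← eval₂_id]
    congr 1
    · ext a; simp [φ]
    · ext i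
      rcases i with i | j
      · simp [φ]
      · fin_cases j
        · simp [φ]
        · simp [φ]
        · have e1 : φ Polynomial.X = y := by simp [φ]
          have e2 : φ (Polynomial.C Polynomial.X) = w := by simp [φ]
          have e3 : φ (Polynomial.X + Polynomial.C Polynomial.X ^ ℓ) = y + w ^ ℓ := by
            rw [map_add, map_pow, e1, e2]
          exact e3
  rw [← h1]
  change Polynomial.eval₂ _ y (polyR ℓ Q) = _
  rw [Polynomial.eval₂_eq_sum_range, Finset.sum_product_right]
  refine Finset.sum_congr rfl fun b hb => ?_
  have hA : ((polyR ℓ Q).coeff b).natDegree < A :=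
    Nat.lt_succ_of_le (Finset.le_sup (f := fun b => ((polyR ℓ Q).coeff b).natDegree) hb)
  rw [Polynomial.coe_eval₂RingHom, Polynomial.eval₂_eq_sum_range' _ hA, Finset.sum_mul]
  refine Finset.sum_congr rfl fun a _ => ?_
  simp only [cf]
  ring

lemma cd_ne {ℓ n : ℕ} (hℓ : 2 ≤ ℓ) (hn : 1 ≤ n) :
    (((ℓ * n).choose 2 : ℕ) : ℂ) - ℓ * ((n.choose 2 : ℕ) : ℂ) ≠ 0 := by
  rw [Nat.cast_choose_two, Nat.cast_choose_two]
  push_cast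
  have h1 : (ℓ : ℂ) ≠ 0 := by exact_mod_cast (by omega : ℓ ≠ 0)
  have h2 : (n : ℂ) ≠ 0 := by exact_mod_cast (by omega : n ≠ 0)
  have h3 : (ℓ : ℂ) - 1 ≠ 0 := by
    intro h
    have : (ℓ : ℂ) = 1 := by linear_combination h
    have : ℓ = 1 := by exact_mod_cast this
    omega
  have : (ℓ : ℂ) * n * (ℓ * n - 1) / 2 - ℓ * (n * (n - 1) / 2) = ℓ * n * n * (ℓ - 1) / 2 := by ring
  rw [this]
  simp [h1, h2, h3]

/-- `Γ^{(r)}(k+1) / Γ(k+1)` -/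
noncomputable def gq (r k : ℕ) : ℂ :=
  iteratedDeriv r Complex.Gamma ((k : ℂ) + 1) / Complex.Gamma ((k : ℂ) + 1)

lemma gamma_ne (k : ℕ) : Complex.Gamma ((k : ℂ) + 1) ≠ 0 := by
  rw [Complex.Gamma_nat_eq_factorial]
  exact_mod_cast Nat.factorial_ne_zero k

lemma asy_psi : Asy (fun k : ℕ => Complex.digamma ((k : ℂ) + 1))
    (fun k : ℕ => deriv Complex.digamma ((k : ℂ) + 1)) :=
  ⟨psi_top, psi_pow, psi_der⟩

lemma expn_gq (r : ℕ) : Expn (fun k : ℕ => Complex.digamma ((k : ℂ) + 1))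
    (fun k : ℕ => deriv Complex.digamma ((k : ℂ) + 1)) (gq r) r (r.choose 2 : ℂ) := by
  refine asy_psi.expn_g (fun i k => iteratedDeriv i Complex.digamma ((k : ℂ) + 1)) gq
    (fun j => by simp) (fun j => by simp [iteratedDeriv_one]) ?_ ?_ ?_ r
  · intro i hi
    obtain ⟨i, rfl⟩ := Nat.exists_eq_add_of_le' (show 1 ≤ i by omega)
    exact asy_psi.neg_of_sq (higher_psi i (by omega))
  · intro j
    simp [gq, gamma_ne]
  · intro r j
    exact gamma_rec r j

end HVZ

/-- **Claim 2.2.** If a polynomial `Q(u₀,…,u_m; v₀,v₁,v₂)` with constant complex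
coefficients is homogeneous of total degree `p` in the variables `(v₀,v₁,v₂)` and
satisfies `Q(ζ,…,ζ^{(m)}; Γ, Γ^{(n)}, Γ^{(ℓn)}) ≡ 0` on the domain of analyticity,
then `Q = 0`. -/
theorem homogeneous_vanishing_implies_zero (ℓ m n p : ℕ) (hℓ : 2 ≤ ℓ) (hn : 1 ≤ n)
    (Q : MvPolynomial (Fin (m + 1) ⊕ Fin 3) ℂ)
    (hhom : Q.IsWeightedHomogeneous
      (Sum.elim (fun _ : Fin (m + 1) => (0 : ℕ)) (fun _ : Fin 3 => (1 : ℕ))) p)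
    (hQ : ∀ z : ℂ, z ≠ 1 → (∀ k : ℕ, z ≠ -(k : ℂ)) →
      MvPolynomial.eval
        (Sum.elim (fun i : Fin (m + 1) => iteratedDeriv (i : ℕ) riemannZeta z)
          (fun j : Fin 3 => iteratedDeriv (![0, n, ℓ * n] j) Complex.Gamma z)) Q = 0) :
    Q = 0 := by
  classical
  obtain ⟨S, hS⟩ := HVZ.polyR_eval ℓ Q
  let F : ℕ × ℕ → ArithmeticFunction ℂ := fun ab =>
    MvPolynomial.aeval (fun i : Fin (m + 1) => HVZ.Zf i) (HVZ.cf ℓ Q ab)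
  obtain ⟨a1, a2, a3, a4, a5⟩ := HVZ.asy_psi.final hn hℓ (HVZ.expn_gq n) (HVZ.expn_gq (ℓ * n))
    (HVZ.cd_ne hℓ hn)
  -- the relation at `z = k + 1`
  have hrel : ∀ k : ℕ, 1 ≤ k → ∑ ab ∈ S, LSeries (fun i => F ab i) ((k : ℂ) + 1) *
      (HVZ.gq n k ^ ab.1 * (HVZ.gq (ℓ * n) k - HVZ.gq n k ^ ℓ) ^ ab.2) = 0 := by
    intro k hk
    have hre : 1 < ((k : ℂ) + 1).re := by
      have : (1 : ℝ) ≤ k := by exact_mod_cast hk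
      simp; omega
    have h1 := hQ ((k : ℂ) + 1) (by
      intro h
      rw [h] at hre
      simp at hre) (HVZ.ne_neg_nat (by linarith))
    have hv : (fun j : Fin 3 => iteratedDeriv (![0, n, ℓ * n] j) Complex.Gamma ((k : ℂ) + 1)) =
        fun j => Complex.Gamma ((k : ℂ) + 1) *
          (![1, HVZ.gq n k, (HVZ.gq (ℓ * n) k - HVZ.gq n k ^ ℓ) + HVZ.gq n k ^ ℓ] : Fin 3 → ℂ) j := by
      have hg := HVZ.gamma_ne k
      ext j
      fin_cases j
      · simp
      · simp [HVZ.gq, mul_div_cancel₀ _ hg]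
      · simp [HVZ.gq, mul_div_cancel₀ _ hg]
    rw [hv, HVZ.eval_homog Q hhom, hS] at h1
    have h2 := (mul_eq_zero.mp h1).resolve_left (pow_ne_zero _ (HVZ.gamma_ne k))
    rw [← h2]
    refine Finset.sum_congr rfl fun ab _ => ?_
    rw [(HVZ.aeval_L (HVZ.cf ℓ Q ab) hre).2]
  have hF : ∀ N, ∀ ab ∈ S, F ab N = 0 := by
    intro N
    induction N using Nat.strong_induction_on with
    | _ N ih =>
    rcases Nat.eq_zero_or_pos N with rfl | hN
    · intro ab _; simp
    refine HVZ.dominance S (fun ab => F ab N)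
      (fun ab k => (N : ℂ) ^ (k + 1) * LSeries (fun i => F ab i) ((k : ℂ) + 1) - F ab N)
      (HVZ.gq n) (fun k => HVZ.gq (ℓ * n) k - HVZ.gq n k ^ ℓ) a1 a2 a3 a4 a5 ?_ ?_
    · intro ab hab K
      exact HVZ.lead_rate (F ab) (HVZ.aeval_L (HVZ.cf ℓ Q ab) (by simp)).1 N hN.ne'
        (fun j hj => ih j hj ab hab) K
    · filter_upwards [Filter.eventually_ge_atTop 1] with k hk
      have := congrArg (fun t => (N : ℂ) ^ (k + 1) * t) (hrel k hk)
      simp only [mul_zero, Finset.mul_sum] at this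
      rw [← this]
      refine Finset.sum_congr rfl fun ab _ => ?_
      ring
  have hc : ∀ ab ∈ S, HVZ.cf ℓ Q ab = 0 := by
    intro ab hab
    apply HVZ.zeta_indep
    ext N
    exact hF N ab hab
  have hprod : Q * MvPolynomial.X (Sum.inr 0) = 0 := by
    apply MvPolynomial.funext
    intro x
    rw [map_mul, MvPolynomial.eval_X, map_zero]
    by_cases hx : x (Sum.inr 0) = 0
    · rw [hx, mul_zero]
    have hxe : x = Sum.elim (fun i => x (Sum.inl i)) (fun j => x (Sum.inr 0) *
        (![1, x (Sum.inr 1) / x (Sum.inr 0), (x (Sum.inr 2) / x (Sum.inr 0) -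
          (x (Sum.inr 1) / x (Sum.inr 0)) ^ ℓ) + (x (Sum.inr 1) / x (Sum.inr 0)) ^ ℓ] :
            Fin 3 → ℂ) j) := by
      ext i
      rcases i with i | j
      · simp
      · fin_cases j
        · simp
        · simp [mul_div_cancel₀ _ hx]
        · simp [mul_div_cancel₀ _ hx]
    have h0 : MvPolynomial.eval x Q = 0 := by
      rw [hxe, HVZ.eval_homog Q hhom, hS]
      rw [Finset.sum_eq_zero (fun ab hab => by rw [hc ab hab, map_zero, zero_mul]), mul_zero]
    rw [h0, zero_mul]
  exact (mul_eq_zero.mp hprod).resolve_right (MvPolynomial.X_ne_zero _)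
end

section
/- Let m ≥ 0 be an integer and let P(u₀,…,u_m; v₀) be a polynomial in m+2 variables whose coefficients are polynomials in z ∈ ℂ, such that P(ζ(z), ζ'(z), …, ζ^{(m)}(z); Γ(z)) = 0 for every z ∈ ℂ at which ζ and Γ are analytic. Then P is the identically zero polynomial. -/
namespace ZG

open Filter Topology

/-- The shifted `p`-adic derivation on arithmetic functions. -/
noncomputable def dFun (p : ℕ) (a : ArithmeticFunction ℂ) : ArithmeticFunction ℂ :=
  ⟨fun n => (padicValNat p (n * p) : ℂ) * a (n * p), by simp⟩

theorem dFun_apply (p : ℕ) (a : ArithmeticFunction ℂ) (n : ℕ) :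
    dFun p a n = (padicValNat p (n * p) : ℂ) * a (n * p) := rfl

theorem half_sum {p : ℕ} (hp : p.Prime) (a b : ArithmeticFunction ℂ) {n : ℕ} (hn : n ≠ 0) :
    ∑ x ∈ (n * p).divisorsAntidiagonal, ((padicValNat p x.1 : ℂ) * a x.1) * b x.2
      = ∑ x ∈ n.divisorsAntidiagonal, dFun p a x.1 * b x.2 := by
  symm
  have hp0 : p ≠ 0 := hp.ne_zero
  refine Finset.sum_of_injOn (fun x => (x.1 * p, x.2)) ?_ ?_ ?_ ?_
  · intro x _ y _ h
    simp only [Prod.mk.injEq] at h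
    exact Prod.ext (Nat.eq_of_mul_eq_mul_right hp.pos h.1) h.2
  · intro x hx
    simp only [Finset.mem_coe, Nat.mem_divisorsAntidiagonal] at hx ⊢
    refine ⟨?_, mul_ne_zero hn hp0⟩
    rw [← hx.1]; ring
  · intro x hx hx'
    simp only [Nat.mem_divisorsAntidiagonal] at hx
    have : ¬ p ∣ x.1 := by
      rintro ⟨c, hc⟩
      apply hx'
      refine ⟨(c, x.2), ?_, ?_⟩
      · simp only [Finset.mem_coe, Nat.mem_divisorsAntidiagonal]
        refine ⟨?_, hn⟩
        apply Nat.eq_of_mul_eq_mul_right hp.pos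
        rw [← hx.1, hc]; ring
      · ext
        · simp [hc, mul_comm]
        · rfl
    simp [padicValNat.eq_zero_of_not_dvd this]
  · intro x hx
    simp [dFun_apply]

theorem dFun_mul {p : ℕ} (hp : p.Prime) (a b : ArithmeticFunction ℂ) :
    dFun p (a * b) = a * dFun p b + b * dFun p a := by
  ext n
  rcases eq_or_ne n 0 with rfl | hn
  · simp
  have hf : Fact p.Prime := ⟨hp⟩
  have h1 := half_sum hp a b hn
  have h2 := half_sum hp b a hn
  rw [mul_comm a (dFun p b), mul_comm b (dFun p a), ArithmeticFunction.add_apply,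
    ArithmeticFunction.mul_apply, ArithmeticFunction.mul_apply, ← h1, ← h2, dFun_apply,
    ArithmeticFunction.mul_apply, Finset.mul_sum]
  have h3 : ∑ x ∈ (n * p).divisorsAntidiagonal, ((padicValNat p x.1 : ℂ) * b x.1) * a x.2
      = ∑ x ∈ (n * p).divisorsAntidiagonal, ((padicValNat p x.2 : ℂ) * b x.2) * a x.1 := by
    refine Finset.sum_equiv (Equiv.prodComm ℕ ℕ) ?_ ?_
    · intro x; simp [mul_comm]
    · intro x _; simp
  rw [h3, ← Finset.sum_add_distrib]
  refine Finset.sum_congr rfl fun x hx => ?_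
  simp only [Nat.mem_divisorsAntidiagonal] at hx
  have h0 : x.1 * x.2 ≠ 0 := by rw [hx.1]; exact hx.2
  rw [← hx.1, padicValNat.mul (left_ne_zero_of_mul h0) (right_ne_zero_of_mul h0)]
  push_cast
  ring

theorem dFun_aeval {p : ℕ} (hp : p.Prime) {m : ℕ} (F : Fin m → ArithmeticFunction ℂ)
    (q : MvPolynomial (Fin m) ℂ) :
    dFun p (MvPolynomial.aeval F q)
      = ∑ i, MvPolynomial.aeval F (MvPolynomial.pderiv i q) * dFun p (F i) := by
  have hadd : ∀ a b, dFun p (a + b) = dFun p a + dFun p b := by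
    intro a b; ext n; simp [dFun_apply, mul_add]
  induction q using MvPolynomial.induction_on with
  | C c =>
    simp only [MvPolynomial.pderiv_C, map_zero, zero_mul, Finset.sum_const_zero,
      MvPolynomial.aeval_C]
    ext n
    rw [dFun_apply, Algebra.algebraMap_eq_smul_one]
    rcases eq_or_ne n 0 with rfl | hn
    · simp
    have : n * p ≠ 1 := by
      intro h
      exact hp.one_lt.ne' (Nat.eq_one_of_mul_eq_one_left h)
    simp [ArithmeticFunction.one_apply_ne this]
  | add f g hf hg =>
    simp only [map_add, hadd, hf, hg, add_mul, Finset.sum_add_distrib]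
  | mul_X f i hf =>
    simp only [map_mul, dFun_mul hp, hf, MvPolynomial.aeval_X, MvPolynomial.pderiv_mul, map_add,
      add_mul, Finset.sum_add_distrib, MvPolynomial.pderiv_X]
    rw [add_comm, Finset.mul_sum]
    congr 1
    · exact Finset.sum_congr rfl fun j _ => by ring
    · rw [Finset.sum_eq_single i]
      · simp
      · intro j _ hj
        simp [hj.symm]
      · simp

/-- Coefficients of the `j`-th derivative of zeta. -/
noncomputable def zc (j : ℕ) : ArithmeticFunction ℂ :=
  ⟨fun n => if n = 0 then 0 else (-(Real.log n : ℂ)) ^ j, by simp⟩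

theorem zc_apply (j n : ℕ) (hn : n ≠ 0) : zc j n = (-(Real.log n : ℂ)) ^ j := if_neg hn

/-- Evaluation at one. -/
noncomputable def ev1 : ArithmeticFunction ℂ →+* ℂ where
  toFun f := f 1
  map_one' := by simp
  map_mul' := by simp
  map_zero' := by simp
  map_add' := by simp

theorem jac {m : ℕ} (g : Fin m → ArithmeticFunction ℂ)
    (h : ∀ p : ℕ, p.Prime → ∑ i, g i * dFun p (zc i) = 0) : g = 0 := by
  let M : Matrix (Fin m) (Fin m) (ArithmeticFunction ℂ) :=
    Matrix.of fun l j => dFun (Nat.nth Nat.Prime l) (zc j)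
  have hpr : ∀ l, (Nat.nth Nat.Prime l).Prime := fun l => Nat.prime_nth_prime l
  have hM : M.mulVec g = 0 := by
    ext1 l
    have := h _ (hpr l)
    simp only [Matrix.mulVec, dotProduct, M, Matrix.of_apply, Pi.zero_apply]
    rw [← this]
    exact Finset.sum_congr rfl fun j _ => mul_comm _ _
  have hdet : IsUnit M.det := by
    rw [ArithmeticFunction.isUnit_iff_isUnit_apply_one]
    have e : M.det 1 = (Matrix.vandermonde
        fun l : Fin m => -(Real.log (Nat.nth Nat.Prime l) : ℂ)).det := by
      change ev1 M.det = _
      rw [RingHom.map_det]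
      congr 1
      ext l j
      have hf : Fact (Nat.nth Nat.Prime l).Prime := ⟨hpr l⟩
      change dFun (Nat.nth Nat.Prime l) (zc j) 1 = _
      rw [dFun_apply, one_mul, zc_apply _ _ (hpr l).ne_zero, padicValNat.self (hpr l).one_lt]
      simp [Matrix.vandermonde_apply]
    rw [e, isUnit_iff_ne_zero, Matrix.det_vandermonde_ne_zero_iff]
    intro a b hab
    simp only [neg_inj, Complex.ofReal_inj] at hab
    have := Real.log_injOn_pos (by simpa using (hpr a).pos) (by simpa using (hpr b).pos) hab
    have := Nat.nth_injective Nat.infinite_setOfPred_prime (Nat.cast_injective this)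
    exact Fin.ext this
  exact Matrix.mulVec_injective_of_det_mem_nonZeroDivisors hdet.mem_nonZeroDivisors
    (by rw [hM, Matrix.mulVec_zero])

theorem algInd {m : ℕ} (N : ℕ) : ∀ q : MvPolynomial (Fin m) ℂ,
    (∀ d, N ≤ d.degree → q.coeff d = 0) →
    MvPolynomial.aeval (fun i : Fin m => zc i) q = 0 → q = 0 := by
  induction N with
  | zero => intro q h _; ext d; simpa using h d (Nat.zero_le _)
  | succ N ih =>
    intro q h hq
    have hg := jac (fun i : Fin m => MvPolynomial.aeval (fun i : Fin m => zc i)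
      (MvPolynomial.pderiv i q)) (by
        intro p hp
        rw [← dFun_aeval hp (fun i : Fin m => zc i) q, hq]
        ext n; simp [dFun_apply])
    have hz : ∀ i, MvPolynomial.pderiv i q = 0 := by
      intro i
      refine ih _ ?_ (congrFun hg i)
      intro d hd
      rw [MvPolynomial.coeff_pderiv, h, zero_mul]
      simp; omega
    have hC : q = MvPolynomial.C (q.coeff 0) := by
      ext d
      rw [MvPolynomial.coeff_C]
      split_ifs with hd
      · rw [hd]
      · obtain ⟨i, hi⟩ := Finsupp.ne_iff.mp (Ne.symm hd)
        have h1 := congrArg (MvPolynomial.coeff (d - Finsupp.single i 1)) (hz i)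
        rw [MvPolynomial.coeff_pderiv, MvPolynomial.coeff_zero, tsub_add_cancel_of_le] at h1
        · rcases mul_eq_zero.mp h1 with h2 | h2
          · exact h2
          · exact absurd h2 (Nat.cast_add_one_ne_zero _)
        · simp at hi ⊢; omega
    rw [hC, MvPolynomial.aeval_C] at hq
    have := congrArg (fun f => f 1) hq
    rw [hC]
    have h0 : q.coeff 0 = 0 := by simpa using this
    rw [h0, map_zero]


theorem gamma_bound (N : ℕ) : ∀ σ : ℝ, 0 < σ →
    ∃ C : ℝ, ∀ t : ℝ, 0 < t → ‖Complex.Gamma (σ + t * Complex.I)‖ * t ^ N ≤ C := by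
  induction N with
  | zero =>
    intro σ hσ
    refine ⟨∫ x in Set.Ioi (0 : ℝ), Real.exp (-x) * x ^ (σ - 1), fun t ht => ?_⟩
    rw [Complex.Gamma_eq_integral (by simpa using hσ), Complex.GammaIntegral, pow_zero, mul_one]
    refine (MeasureTheory.norm_integral_le_integral_norm _).trans (le_of_eq ?_)
    refine MeasureTheory.setIntegral_congr_fun measurableSet_Ioi fun x hx => ?_
    simp only [norm_mul, Complex.norm_cpow_eq_rpow_re_of_pos hx, Complex.norm_real]
    simp
  | succ N ih =>
    intro σ hσ
    obtain ⟨C, hC⟩ := ih (σ + 1) (by linarith)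
    refine ⟨C, fun t ht => ?_⟩
    have h := hC t ht
    have e : ((σ + 1 : ℝ) : ℂ) + t * Complex.I = (σ + t * Complex.I) + 1 := by push_cast; ring
    have hz : (σ + t * Complex.I : ℂ) ≠ 0 := by
      intro h0
      have := congrArg Complex.re h0
      simp at this
      linarith
    rw [e, Complex.Gamma_add_one _ hz, norm_mul] at h
    have hn : t ≤ ‖(σ + t * Complex.I : ℂ)‖ := by
      have := Complex.abs_im_le_norm (σ + t * Complex.I : ℂ)
      simp at this
      exact (le_abs_self t).trans this
    refine le_trans ?_ h
    rw [pow_succ]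
    calc _ = t * (‖Complex.Gamma (σ + t * Complex.I)‖ * t ^ N) := by ring
      _ ≤ ‖(σ + t * Complex.I : ℂ)‖ * (‖Complex.Gamma (σ + t * Complex.I)‖ * t ^ N) := by gcongr
      _ = _ := by ring

theorem gamma_tendsto (σ : ℝ) (hσ : 0 < σ) (j : ℕ) :
    Tendsto (fun t : ℝ => Complex.Gamma (σ + t * Complex.I) * (σ + t * Complex.I) ^ j)
      atTop (𝓝 0) := by
  obtain ⟨C, hC⟩ := gamma_bound (j + 1) σ hσ
  have h1 : Tendsto (fun t : ℝ => (C * (σ + 1) ^ j) * t⁻¹) atTop (𝓝 0) := by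
    simpa using tendsto_inv_atTop_zero.const_mul (C * (σ + 1) ^ j)
  refine squeeze_zero_norm' ?_ h1
  filter_upwards [eventually_ge_atTop 1] with t ht
  have ht0 : 0 < t := by linarith
  have h := hC t ht0
  have hz : ‖(σ + t * Complex.I : ℂ)‖ ≤ (σ + 1) * t := by
    refine (norm_add_le _ _).trans ?_
    simp [abs_of_pos hσ, abs_of_pos ht0]
    nlinarith
  rw [norm_mul, norm_pow, ← div_eq_mul_inv, le_div_iff₀ ht0]
  calc _ ≤ ‖Complex.Gamma (σ + t * Complex.I)‖ * ((σ + 1) * t) ^ j * t := by gcongr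
    _ = (‖Complex.Gamma (σ + t * Complex.I)‖ * t ^ (j + 1)) * (σ + 1) ^ j := by
      rw [mul_pow]; ring
    _ ≤ _ := by gcongr

theorem inv_tendsto (σ : ℝ) :
    Tendsto (fun t : ℝ => (σ + t * Complex.I : ℂ)⁻¹) atTop (𝓝 0) := by
  refine squeeze_zero_norm' ?_ tendsto_inv_atTop_zero
  filter_upwards [eventually_ge_atTop 1] with t ht
  rw [norm_inv]
  have hn : t ≤ ‖(σ + t * Complex.I : ℂ)‖ := by
    have := Complex.abs_im_le_norm (σ + t * Complex.I : ℂ)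
    simp at this
    exact (le_abs_self t).trans this
  gcongr

theorem dominant (σ : ℝ) (hσ : 0 < σ) (S : Finset (ℕ × ℕ)) (b : ℕ × ℕ → ℝ → ℂ)
    (hb : ∀ x, ∃ C : ℝ, ∀ t, ‖b x t‖ ≤ C) (x0 : ℕ × ℕ) (hx0 : x0 ∈ S)
    (hext : ∀ x ∈ S, x ≠ x0 → x0.1 < x.1 ∨ (x.1 = x0.1 ∧ x.2 < x0.2))
    (hsum : ∀ t : ℝ, 0 < t → ∑ x ∈ S, Complex.Gamma (σ + t * Complex.I) ^ x.1 *
      (σ + t * Complex.I) ^ x.2 * b x t = 0) :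
    Tendsto (b x0) atTop (𝓝 0) := by
  have hz : ∀ t : ℝ, (σ + t * Complex.I : ℂ) ≠ 0 := by
    intro t h0
    have := congrArg Complex.re h0
    simp at this
    linarith
  have hG : ∀ t : ℝ, Complex.Gamma (σ + t * Complex.I) ≠ 0 := by
    intro t
    exact Complex.Gamma_ne_zero_of_re_pos (by simpa using hσ)
  have hterm : ∀ x ∈ S.erase x0, Tendsto (fun t : ℝ =>
      (Complex.Gamma (σ + t * Complex.I) ^ x.1 * (σ + t * Complex.I) ^ x.2) /
      (Complex.Gamma (σ + t * Complex.I) ^ x0.1 * (σ + t * Complex.I) ^ x0.2) * b x t)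
      atTop (𝓝 0) := by
    intro x hx
    rw [Finset.mem_erase] at hx
    obtain ⟨C, hC⟩ := hb x
    refine Tendsto.zero_mul_isBoundedUnder_le ?_
      (isBoundedUnder_of ⟨C, fun t => by simpa using hC t⟩)
    rcases hext x hx.2 hx.1 with h | ⟨h1, h2⟩
    · obtain ⟨e, he⟩ := Nat.exists_eq_add_of_lt h
      have h3 := ((gamma_tendsto σ hσ x.2).mul
        (((gamma_tendsto σ hσ 0).pow e).mul ((inv_tendsto σ).pow x0.2)))
      rw [zero_mul] at h3
      refine h3.congr fun t => ?_
      have := hz t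
      have := hG t
      simp only [he, pow_add, inv_pow, pow_zero, mul_one, pow_one]
      field_simp
    · obtain ⟨e, he⟩ := Nat.exists_eq_add_of_lt h2
      have h3 := (inv_tendsto σ).pow (e + 1)
      rw [zero_pow (Nat.succ_ne_zero e)] at h3
      refine h3.congr fun t => ?_
      have := hz t
      have := hG t
      simp only [he, h1, pow_add, inv_pow]
      field_simp
  have hs := (tendsto_finsetSum _ hterm).neg
  simp only [Finset.sum_const_zero, neg_zero] at hs
  refine hs.congr' ?_
  filter_upwards [eventually_gt_atTop 0] with t ht
  have h := hsum t ht
  rw [← Finset.add_sum_erase _ _ hx0] at h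
  have hD : Complex.Gamma (σ + t * Complex.I) ^ x0.1 * (σ + t * Complex.I) ^ x0.2 ≠ 0 :=
    mul_ne_zero (pow_ne_zero _ (hG t)) (pow_ne_zero _ (hz t))
  simp only [div_mul_eq_mul_div]
  rw [← Finset.sum_div, neg_eq_iff_add_eq_zero, div_add' _ _ _ hD, div_eq_zero_iff]
  left
  rw [← h]; ring

theorem logMul_iter (j n : ℕ) :
    (LSeries.logMul^[j] 1) n = (Complex.log n) ^ j := by
  induction j with
  | zero => simp
  | succ j ih =>
    rw [Function.iterate_succ', Function.comp_apply, LSeries.logMul, ih, pow_succ, mul_comm]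

theorem zc_hasSum (j : ℕ) {s : ℂ} (hs : 1 < s.re) :
    LSeriesHasSum (fun n => zc j n) s (iteratedDeriv j riemannZeta s) := by
  have ha : LSeries.abscissaOfAbsConv 1 < s.re := by
    rw [LSeries.abscissaOfAbsConv_one]; exact_mod_cast hs
  have h1 : iteratedDeriv j riemannZeta s = iteratedDeriv j (LSeries 1) s := by
    apply Filter.EventuallyEq.iteratedDeriv_eq
    have : {s : ℂ | 1 < s.re} ∈ 𝓝 s :=
      (isOpen_lt continuous_const Complex.continuous_re).mem_nhds hs
    filter_upwards [this] with w hw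
    exact (LSeries_one_eq_riemannZeta hw).symm
  rw [h1, LSeries_iteratedDeriv j ha]
  have h2 : LSeriesSummable (LSeries.logMul^[j] 1) s :=
    LSeriesSummable_of_abscissaOfAbsConv_lt_re (by rwa [LSeries.absicssaOfAbsConv_logPowMul])
  have h3 := h2.LSeriesHasSum.smul ((-1) ^ j)
  refine (LSeriesHasSum_congr _ _ fun {n} hn => ?_).mp h3
  rw [zc_apply _ _ hn, Pi.smul_apply, logMul_iter, smul_eq_mul, Complex.natCast_log,
    ← mul_pow, neg_one_mul]

theorem aeval_hasSum {m : ℕ} (q : MvPolynomial (Fin m) ℂ) {s : ℂ} (hs : 1 < s.re) :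
    LSeriesHasSum (fun n => (MvPolynomial.aeval (fun i : Fin m => zc i) q) n) s
      (MvPolynomial.eval (fun i : Fin m => iteratedDeriv (i : ℕ) riemannZeta s) q) := by
  induction q using MvPolynomial.induction_on with
  | C c =>
    rw [MvPolynomial.aeval_C, MvPolynomial.eval_C, Algebra.algebraMap_eq_smul_one]
    have h : LSeriesHasSum (fun n => (1 : ArithmeticFunction ℂ) n) s 1 := by
      have h0 : LSeries.term (fun n => (1 : ArithmeticFunction ℂ) n) s
          = fun n => if n = 1 then 1 else 0 := by
        ext n
        rcases eq_or_ne n 0 with rfl | hn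
        · simp
        rw [LSeries.term_of_ne_zero hn]
        split_ifs with h
        · simp [h]
        · simp [ArithmeticFunction.one_apply_ne h]
      rw [LSeriesHasSum, h0]
      exact hasSum_ite_eq 1 1
    simpa [Pi.smul_def] using h.smul c
  | add f g hf hg =>
    simpa [Pi.add_def] using hf.add hg
  | mul_X f i hf =>
    simpa using ArithmeticFunction.LSeriesHasSum_mul hf (zc_hasSum i hs)

theorem lower_bound (a : ArithmeticFunction ℂ) (ha : a ≠ 0)
    (hs : ∀ s : ℂ, 1 < s.re → LSeriesSummable (fun n => a n) s) :
    ∃ σ : ℝ, 1 < σ ∧ ∃ c : ℝ, 0 < c ∧ ∀ t : ℝ,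
      c ≤ ‖LSeries (fun n => a n) (σ + t * Complex.I)‖ := by
  classical
  have hex : ∃ n, a n ≠ 0 := by
    by_contra! h
    exact ha (ArithmeticFunction.ext h)
  obtain ⟨n, hn⟩ : ∃ n, Nat.find hex = n + 1 := by
    refine Nat.exists_eq_succ_of_ne_zero fun h => ?_
    have := Nat.find_spec hex
    rw [h] at this
    simp at this
  have hne : a (n + 1) ≠ 0 := hn ▸ Nat.find_spec hex
  have hlt : ∀ k ≤ n, a k = 0 := by
    intro k hk
    by_contra h
    have := Nat.find_min' hex h
    omega
  let g : ℕ → ℂ := fun k => if k ≤ n + 1 then 0 else (‖a k‖ : ℂ)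
  have hgn : ∀ (σ t : ℝ) (k : ℕ), (if k = n + 1 then 0
      else ‖LSeries.term (fun n => a n) (σ + t * Complex.I) k‖) = ‖LSeries.term g σ k‖ := by
    intro σ t k
    rw [LSeries.norm_term_eq, LSeries.norm_term_eq]
    rcases eq_or_ne k 0 with rfl | hk
    · simp
    rcases lt_trichotomy k (n + 1) with h | h | h
    · simp [g, h.le, hlt k (by omega)]
    · simp [g, h]
    · simp [g, h.not_ge, h.ne', hk]
  have hgr : ∀ (σ : ℝ) (k : ℕ), LSeries.term g σ k = (‖LSeries.term g σ k‖ : ℂ) := by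
    intro σ k
    rw [LSeries.norm_term_eq]
    rcases eq_or_ne k 0 with rfl | hk
    · simp
    rw [LSeries.term_of_ne_zero hk]
    simp only [hk, if_false, Complex.ofReal_re, g]
    split_ifs
    · simp
    · rw [Complex.norm_real, norm_norm, Complex.ofReal_div, Complex.ofReal_cpow (Nat.cast_nonneg k)]
      simp
  have hsn : ∀ σ t : ℝ, 1 < σ → Summable fun k =>
      ‖LSeries.term (fun n => a n) (σ + t * Complex.I) k‖ := by
    intro σ t hσ
    exact (hs (σ + t * Complex.I) (by simpa using hσ)).norm
  have hgs : ∀ σ : ℝ, 1 < σ → Summable fun k => ‖LSeries.term g σ k‖ := by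
    intro σ hσ
    refine (hsn σ 0 hσ).of_nonneg_of_le (fun _ => norm_nonneg _) fun k => ?_
    rw [← hgn σ 0 k]
    split_ifs
    · exact norm_nonneg _
    · exact le_rfl
  have habs : LSeries.abscissaOfAbsConv g < ⊤ := by
    have : LSeriesSummable g (2 : ℝ) := (hgs 2 (by norm_num)).of_norm
    exact this.abscissaOfAbsConv_le.trans_lt (EReal.coe_lt_top _)
  have hT := LSeries.tendsto_cpow_mul_atTop (f := g) (n := n)
    (fun k hk => by simp [g, Nat.le_succ_of_le hk]) habs
  have hg0 : g (n + 1) = 0 := by simp [g]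
  rw [hg0] at hT
  have hpos : 0 < ‖a (n + 1)‖ / 2 := by have := norm_pos_iff.mpr hne; linarith
  have hev := (hT.norm.eventually_lt_const (u := ‖a (n + 1)‖ / 2) (by rw [norm_zero]; exact hpos)).and (eventually_gt_atTop 1)
  obtain ⟨σ, h1, hσ⟩ := hev.exists
  refine ⟨σ, hσ, ‖a (n + 1)‖ / 2 / ((n + 1 : ℝ) ^ σ), by positivity, fun t => ?_⟩
  have hnp : (0 : ℝ) < (n + 1 : ℝ) ^ σ := by positivity
  have hnorm : ‖((n : ℂ) + 1) ^ (σ : ℂ)‖ = (n + 1 : ℝ) ^ σ := by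
    have := Complex.norm_natCast_cpow_of_pos (n := n + 1) (Nat.succ_pos n) (σ : ℂ)
    simpa using this
  rw [norm_mul, hnorm] at h1
  have hsplit := (hs (σ + t * Complex.I) (by simpa using hσ)).tsum_eq_add_tsum_ite (n + 1)
  rw [LSeries, hsplit]
  have hrest : ‖∑' k, (if k = n + 1 then 0
      else LSeries.term (fun n => a n) (σ + t * Complex.I) k)‖ ≤ ‖LSeries g σ‖ := by
    have e : ∀ k, ‖(if k = n + 1 then 0
      else LSeries.term (fun n => a n) (σ + t * Complex.I) k)‖ = ‖LSeries.term g σ k‖ := by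
      intro k
      rw [← hgn σ t k]
      split_ifs <;> simp
    have hL : LSeries g σ = ((∑' k, ‖LSeries.term g σ k‖ : ℝ) : ℂ) := by
      rw [LSeries, Complex.ofReal_tsum]
      exact tsum_congr (hgr σ)
    rw [hL, Complex.norm_real, Real.norm_of_nonneg (tsum_nonneg fun _ => norm_nonneg _)]
    refine (norm_tsum_le_tsum_norm ?_).trans (le_of_eq (tsum_congr e))
    exact (hgs σ hσ).congr fun k => (e k).symm
  have hmain : ‖LSeries.term (fun n => a n) (σ + t * Complex.I) (n + 1)‖
      = ‖a (n + 1)‖ / (n + 1 : ℝ) ^ σ := by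
    rw [LSeries.norm_term_eq]
    simp
  have hr2 : ‖LSeries g σ‖ ≤ ‖a (n + 1)‖ / 2 / (n + 1 : ℝ) ^ σ := by
    rw [le_div_iff₀ hnp, mul_comm]; exact h1.le
  have htri := norm_sub_le_norm_add (LSeries.term (fun n => a n) (σ + t * Complex.I) (n + 1))
    (∑' k, (if k = n + 1 then 0 else LSeries.term (fun n => a n) (σ + t * Complex.I) k))
  have h4 : ‖a (n + 1)‖ / (n + 1 : ℝ) ^ σ = ‖a (n + 1)‖ / 2 / (n + 1 : ℝ) ^ σ
    + ‖a (n + 1)‖ / 2 / (n + 1 : ℝ) ^ σ := by ring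
  linarith

theorem upper_bound (a : ArithmeticFunction ℂ)
    (hs : ∀ s : ℂ, 1 < s.re → LSeriesSummable (fun n => a n) s) (σ : ℝ) (hσ : 1 < σ) :
    ∃ C : ℝ, ∀ t : ℝ, ‖LSeries (fun n => a n) (σ + t * Complex.I)‖ ≤ C := by
  refine ⟨∑' k, ‖LSeries.term (fun n => a n) σ k‖, fun t => ?_⟩
  refine (norm_tsum_le_tsum_norm (hs _ (by simpa using hσ)).norm).trans (le_of_eq ?_)
  refine tsum_congr fun k => ?_
  rw [LSeries.norm_term_eq, LSeries.norm_term_eq]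
  simp

/-- The coefficient polynomial of `Γ ^ x.1 * z ^ x.2` in `P`. -/
noncomputable def slice {m : ℕ} (P : MvPolynomial (Fin (m + 1) ⊕ Fin 1) (Polynomial ℂ))
    (x : ℕ × ℕ) : MvPolynomial (Fin (m + 1)) ℂ :=
  ∑ d ∈ P.support, if d (Sum.inr 0) = x.1 then
    MvPolynomial.monomial (Finsupp.sumFinsuppEquivProdFinsupp d).1 ((P.coeff d).coeff x.2) else 0

theorem slice_coeff {m : ℕ} (P : MvPolynomial (Fin (m + 1) ⊕ Fin 1) (Polynomial ℂ))
    (d : (Fin (m + 1) ⊕ Fin 1) →₀ ℕ) (hd : d ∈ P.support) (j : ℕ) :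
    (slice P (d (Sum.inr 0), j)).coeff (Finsupp.sumFinsuppEquivProdFinsupp d).1
      = (P.coeff d).coeff j := by
  classical
  rw [slice, MvPolynomial.coeff_sum, Finset.sum_eq_single d]
  · simp
  · intro d' _ hne
    split_ifs with h
    · rw [MvPolynomial.coeff_monomial, if_neg]
      intro he
      apply hne
      apply Finsupp.sumFinsuppEquivProdFinsupp.injective
      refine Prod.ext he ?_
      refine Finsupp.ext fun i => ?_
      rw [Subsingleton.elim i 0]
      simpa [Finsupp.sumFinsuppEquivProdFinsupp] using h
    · simp
  · exact fun h => absurd hd h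

theorem slice_eval {m : ℕ} (P : MvPolynomial (Fin (m + 1) ⊕ Fin 1) (Polynomial ℂ)) (K J : ℕ)
    (hK : ∀ d ∈ P.support, d (Sum.inr 0) < K) (hJ : ∀ d ∈ P.support, (P.coeff d).natDegree < J)
    (z G : ℂ) (u : Fin (m + 1) → ℂ) :
    MvPolynomial.eval₂ (Polynomial.evalRingHom z) (Sum.elim u (fun _ : Fin 1 => G)) P
      = ∑ x ∈ Finset.range K ×ˢ Finset.range J,
          G ^ x.1 * z ^ x.2 * MvPolynomial.eval u (slice P x) := by
  have h1 : ∀ x ∈ Finset.range K ×ˢ Finset.range J,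
      G ^ x.1 * z ^ x.2 * MvPolynomial.eval u (slice P x)
      = ∑ d ∈ P.support, if d (Sum.inr 0) = x.1 then G ^ x.1 * (z ^ x.2 *
          (P.coeff d).coeff x.2 * ∏ i, u i ^ d (Sum.inl i)) else 0 := by
    intro x _
    rw [slice, map_sum, Finset.mul_sum]
    refine Finset.sum_congr rfl fun d _ => ?_
    split_ifs
    · rw [MvPolynomial.eval_monomial, Finsupp.prod_fintype _ _ (by simp)]
      simp only [Finsupp.sumFinsuppEquivProdFinsupp, Equiv.coe_fn_mk, Finsupp.comapDomain_apply]
      ring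
    · simp
  rw [Finset.sum_congr rfl h1, Finset.sum_comm, MvPolynomial.eval₂_eq']
  refine Finset.sum_congr rfl fun d hd => ?_
  rw [Finset.sum_product, Finset.sum_eq_single (d (Sum.inr 0))]
  · simp only [if_true, Polynomial.coe_evalRingHom, Fintype.prod_sum_type, Sum.elim_inl,
      Sum.elim_inr, Finset.univ_unique, Finset.prod_singleton, Fin.default_eq_zero]
    rw [Polynomial.eval_eq_sum_range' (hJ d hd), Finset.sum_mul]
    exact Finset.sum_congr rfl fun j _ => by ring
  · intro k _ hk
    exact Finset.sum_eq_zero fun j _ => if_neg hk.symm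
  · intro h
    exact absurd (Finset.mem_range.mpr (hK d hd)) h

end ZG

/-- **The `n = 0` case.** If `P(u₀,…,u_m; v₀)` is a polynomial with polynomial
coefficients in `z` such that `P(ζ(z),…,ζ^{(m)}(z); Γ(z)) = 0` for all `z ≠ 1` not a
nonpositive integer, then `P = 0`. -/
theorem zeta_gamma_independence_no_derivatives (m : ℕ)
    (P : MvPolynomial (Fin (m + 1) ⊕ Fin 1) (Polynomial ℂ))
    (hP : ∀ z : ℂ, z ≠ 1 → (∀ k : ℕ, z ≠ -(k : ℂ)) →
      MvPolynomial.eval₂ (Polynomial.evalRingHom z)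
        (Sum.elim (fun i : Fin (m + 1) => iteratedDeriv (i : ℕ) riemannZeta z)
          (fun _ : Fin 1 => Complex.Gamma z)) P = 0) :
    P = 0 := by
  classical
  by_contra hne
  obtain ⟨d0, hd0⟩ := MvPolynomial.ne_zero_iff.mp hne
  let K := P.support.sup (fun d => d (Sum.inr 0)) + 1
  let J := P.support.sup (fun d => (P.coeff d).natDegree) + 1
  have hK : ∀ d ∈ P.support, d (Sum.inr 0) < K := fun d hd =>
    Nat.lt_succ_of_le (Finset.le_sup (f := fun d => d (Sum.inr 0)) hd)
  have hJ : ∀ d ∈ P.support, (P.coeff d).natDegree < J := fun d hd =>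
    Nat.lt_succ_of_le (Finset.le_sup (f := fun d => (P.coeff d).natDegree) hd)
  let S := (Finset.range K ×ˢ Finset.range J).filter (fun x => ZG.slice P x ≠ 0)
  have hd0s : d0 ∈ P.support := MvPolynomial.mem_support_iff.mpr hd0
  have hS : S.Nonempty := by
    refine ⟨(d0 (Sum.inr 0), (P.coeff d0).natDegree), ?_⟩
    simp only [S, Finset.mem_filter, Finset.mem_product, Finset.mem_range]
    refine ⟨⟨hK _ hd0s, hJ _ hd0s⟩, fun h => hd0 ?_⟩
    have h1 := ZG.slice_coeff P d0 hd0s (P.coeff d0).natDegree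
    rw [h, MvPolynomial.coeff_zero] at h1
    exact Polynomial.leadingCoeff_eq_zero.mp h1.symm
  obtain ⟨x0, hx0, hmin⟩ := Finset.exists_min_image S
    (fun x : ℕ × ℕ => toLex (x.1, OrderDual.toDual x.2)) hS
  have hx0ne : ZG.slice P x0 ≠ 0 := (Finset.mem_filter.mp hx0).2
  let A : ℕ × ℕ → ArithmeticFunction ℂ := fun x =>
    MvPolynomial.aeval (fun i : Fin (m + 1) => ZG.zc i) (ZG.slice P x)
  have hA0 : A x0 ≠ 0 := by
    intro h
    refine hx0ne (ZG.algInd ((ZG.slice P x0).totalDegree + 1) _ ?_ h)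
    intro d hd
    by_contra hc
    have := MvPolynomial.le_totalDegree (MvPolynomial.mem_support_iff.mpr hc)
    rw [Finsupp.degree_eq_sum] at hd
    rw [Finsupp.sum_fintype _ _ (by simp)] at this
    omega
  have hsm : ∀ x, ∀ s : ℂ, 1 < s.re → LSeriesSummable (fun n => A x n) s := fun x s hs =>
    (ZG.aeval_hasSum (ZG.slice P x) hs).LSeriesSummable
  obtain ⟨σ, hσ, c, hc, hlow⟩ := ZG.lower_bound (A x0) hA0 (hsm x0)
  have hT := ZG.dominant σ (by linarith) S
    (fun x t => LSeries (fun n => A x n) (σ + t * Complex.I))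
    (fun x => ZG.upper_bound (A x) (hsm x) σ hσ) x0 hx0 (by
      intro x hx hxne
      have h := hmin x hx
      rw [Prod.Lex.toLex_le_toLex] at h
      rcases h with h | ⟨h1, h2⟩
      · exact Or.inl h
      · refine Or.inr ⟨h1.symm, lt_of_le_of_ne (OrderDual.toDual_le_toDual.mp h2) fun h3 => ?_⟩
        exact hxne (Prod.ext h1.symm h3)) (by
      intro t ht
      have hre : (1 : ℝ) < ((σ : ℂ) + t * Complex.I).re := by simpa using hσ
      have h := hP (σ + t * Complex.I)
        (by intro h; rw [h] at hre; simp at hre)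
        (by
          intro k h
          rw [h] at hre
          simp at hre
          have : (0 : ℝ) ≤ k := Nat.cast_nonneg k
          linarith)
      rw [ZG.slice_eval P K J hK hJ] at h
      rw [← h, Finset.sum_filter]
      refine Finset.sum_congr rfl fun x _ => ?_
      split_ifs with hx
      · rw [(ZG.aeval_hasSum (ZG.slice P x) hre).LSeries_eq]
      · rw [not_not.mp hx]; simp)
  have hev := hT.norm.eventually_lt_const (u := c) (by rw [norm_zero]; exact hc)
  obtain ⟨t, ht⟩ := hev.exists
  exact absurd (hlow t) (not_le.mpr ht)
end

section
/- Let m ≥ 0 and n ≥ 1 be integers and let P(u₀,…,u_m; v₀,v₁) be a polynomial in m+3 variables whose coefficients are polynomials in z ∈ ℂ, such that P(ζ(z), ζ'(z), …, ζ^{(m)}(z); Γ(z), Γ^{(n)}(z)) = 0 for every z ∈ ℂ at which ζ and Γ are analytic. Then P is the identically zero polynomial. -/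
open Filter Topology MvPolynomial

noncomputable def Zf (k : ℕ) : ArithmeticFunction ℂ :=
  ⟨fun n => if n = 0 then 0 else (-Complex.log n) ^ k, by simp⟩

lemma Zf_apply (k n : ℕ) (hn : n ≠ 0) : Zf k n = (-Complex.log n) ^ k := by
  simp [Zf, hn]

lemma logMul_iter (k n : ℕ) (f : ℕ → ℂ) :
    (LSeries.logMul^[k] f) n = (Complex.log n) ^ k * f n := by
  induction k with
  | zero => simp
  | succ k ih => rw [Function.iterate_succ_apply', LSeries.logMul, ih]; ring

lemma Zf_eq (k n : ℕ) (hn : n ≠ 0) :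
    Zf k n = (((-1 : ℂ) ^ k) • (LSeries.logMul^[k] (1 : ℕ → ℂ))) n := by
  rw [Zf_apply k n hn, Pi.smul_apply, logMul_iter, neg_pow]; simp

lemma Zf_summable (k : ℕ) (s : ℂ) (hs : 1 < s.re) : LSeriesSummable (Zf k) s := by
  rw [LSeriesSummable_congr s (fun {n} hn => Zf_eq k n hn)]
  apply LSeriesSummable.smul
  apply LSeriesSummable_of_abscissaOfAbsConv_lt_re
  rw [LSeries.absicssaOfAbsConv_logPowMul, LSeries.abscissaOfAbsConv_one]
  exact_mod_cast hs

lemma Zf_zeta (k : ℕ) (s : ℂ) (hs : 1 < s.re) :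
    LSeries (Zf k) s = iteratedDeriv k riemannZeta s := by
  rw [LSeries_congr (fun {n} hn => Zf_eq k n hn), LSeries_smul]
  rw [← LSeries_iteratedDeriv]
  · apply Filter.EventuallyEq.iteratedDeriv_eq
    have : {z : ℂ | 1 < z.re} ∈ 𝓝 s :=
      (isOpen_lt continuous_const Complex.continuous_re).mem_nhds hs
    filter_upwards [this] with z hz
    exact LSeries_one_eq_riemannZeta hz
  · rw [LSeries.abscissaOfAbsConv_one]
    exact_mod_cast hs

noncomputable def tw (χ : ℕ →* ℂ) : ArithmeticFunction ℂ →ₐ[ℂ] ArithmeticFunction ℂ where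
  toFun f := ⟨fun n => χ n * f n, by simp⟩
  map_one' := by
    ext n
    by_cases h : n = 1
    · simp [h]
    · simp [ArithmeticFunction.one_apply_ne h]
  map_zero' := by ext n; simp
  map_add' f g := by
    ext n
    exact mul_add _ _ _
  map_mul' f g := by
    ext n
    simp only [ArithmeticFunction.coe_mk, ArithmeticFunction.mul_apply, Finset.mul_sum]
    refine Finset.sum_congr rfl fun x hx => ?_
    rw [← (Nat.mem_divisorsAntidiagonal.1 hx).1, map_mul]
    exact mul_mul_mul_comm _ _ _ _
  commutes' r := by
    ext n
    simp only [Algebra.algebraMap_eq_smul_one]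
    by_cases h : n = 1
    · simp [h]
    · simp [ArithmeticFunction.one_apply_ne h]

lemma tw_apply (χ : ℕ →* ℂ) (f) (n : ℕ) : tw χ f n = χ n * f n := rfl

lemma LS_aeval {M : ℕ} (s : ℂ) (f : Fin M → ArithmeticFunction ℂ)
    (hf : ∀ k, LSeriesSummable (f k) s) (q : MvPolynomial (Fin M) ℂ) :
    LSeriesSummable (aeval f q : ArithmeticFunction ℂ) s ∧
    LSeries (aeval f q : ArithmeticFunction ℂ) s = aeval (fun k => LSeries (f k) s) q := by
  induction q using MvPolynomial.induction_on with
  | C a =>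
    have : ((algebraMap ℂ (ArithmeticFunction ℂ) a : ArithmeticFunction ℂ) : ℕ → ℂ)
        = a • LSeries.delta := by
      ext n
      rw [Algebra.algebraMap_eq_smul_one]
      by_cases h : n = 1 
      · simp [h, LSeries.delta]
      · simp [ArithmeticFunction.one_apply_ne h, LSeries.delta, h]
    rw [aeval_C, aeval_C, this]
    constructor
    · apply LSeriesSummable.smul
      apply summable_of_hasFiniteSupport
      refine (Set.finite_singleton 1).subset fun n hn => ?_
      by_contra h
      apply hn
      simp only [Set.mem_singleton_iff] at h
      by_cases h0 : n = 0
      · simp [h0]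
      · simp [LSeries.term_of_ne_zero h0, LSeries.delta, h]
    · rw [LSeries_smul]; simp [LSeries_delta]
  | add p q hp hq =>
    rw [map_add, map_add]
    have : ((aeval f p + aeval f q : ArithmeticFunction ℂ) : ℕ → ℂ) =
      ⇑(aeval f p) + ⇑(aeval f q) := by ext n; simp
    rw [this]
    exact ⟨hp.1.add hq.1, by rw [LSeries_add hp.1 hq.1, hp.2, hq.2]⟩
  | mul_X p k hp =>
    rw [map_mul, map_mul, aeval_X, aeval_X]
    exact ⟨ArithmeticFunction.LSeriesSummable_mul hp.1 (hf k), by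
      rw [ArithmeticFunction.LSeries_mul' hp.1 (hf k), hp.2]⟩

noncomputable def chi (c : ℕ → ℂ) : ℕ →* ℂ where
  toFun n := if n = 0 then 0 else (n.primeFactorsList.map c).prod
  map_one' := by simp
  map_mul' a b := by
    by_cases ha : a = 0
    · simp [ha]
    by_cases hb : b = 0
    · simp [hb]
    simp only [ha, hb, mul_eq_zero, or_self, if_false]
    rw [((Nat.perm_primeFactorsList_mul ha hb).map c).prod_eq]; simp

lemma chi_apply (c : ℕ → ℂ) (n : ℕ) (hn : n ≠ 0) :
    chi c n = (n.primeFactorsList.map c).prod := by simp [chi, hn]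

lemma chi_smul (c : ℕ → ℂ) (ε : ℂ) (n : ℕ) (hn : n ≠ 0) :
    chi (fun p => ε * c p) n = ε ^ n.primeFactorsList.length * chi c n := by
  simp only [chi_apply _ n hn]
  induction n.primeFactorsList with
  | nil => simp
  | cons a l ih => simp only [List.map_cons, List.prod_cons, ih, List.length_cons]; ring

lemma list_bound (l : List ℕ) (c : ℕ → ℂ) (R : ℝ) (hc : ∀ p, ‖c p‖ ≤ R) :
    ‖(l.map c).prod‖ ≤ R ^ l.length := by
  have hR : 0 ≤ R := (norm_nonneg _).trans (hc 0)
  induction l with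
  | nil => simp
  | cons a l ih =>
    simp only [List.map_cons, List.prod_cons, List.length_cons, norm_mul, pow_succ']
    exact mul_le_mul (hc a) ih (norm_nonneg _) hR

lemma hom_eval {M : ℕ} {h : MvPolynomial (Fin M) ℂ} {d : ℕ} (hh : h.IsHomogeneous d) (r : ℂ)
    (y : Fin M → ℂ) : eval (fun k => r * y k) h = r ^ d * eval y h := by
  rw [eval_eq, eval_eq, Finset.mul_sum]
  refine Finset.sum_congr rfl fun e he => ?_
  have := hh.degree_eq_sum_deg_support he
  simp only [mul_pow, Finset.prod_mul_distrib, Finset.prod_pow_eq_pow_sum]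
  rw [← this]; ring

lemma tangent {M : ℕ} (q : MvPolynomial (Fin M) ℂ) (hq : q ≠ 0) (a : Fin M → ℂ) :
    ∃ h : MvPolynomial (Fin M) ℂ, h ≠ 0 ∧ ∀ (y : ℝ → Fin M → ℂ) (b : Fin M → ℂ),
      Tendsto y (𝓝[>] 0) (𝓝 b) →
      (∀ᶠ ε : ℝ in 𝓝[>] 0, eval (fun k => a k + ε * y ε k) q = 0) → eval b h = 0 := by
  classical
  let t : MvPolynomial (Fin M) ℂ := aeval (fun k => C (a k) + X k) q
  have ht : ∀ y, eval y t = eval (fun k => a k + y k) q := by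
    intro y
    simp only [t]
    rw [← coe_aeval_eq_eval, ← coe_aeval_eq_eval]
    simp only [RingHom.coe_coe]
    rw [← AlgHom.comp_apply, comp_aeval]
    simp
  have ht0 : t ≠ 0 := by
    intro h0
    apply hq
    apply MvPolynomial.funext
    intro x
    have := ht (fun k => x k - a k)
    rw [h0] at this
    simpa using this.symm
  have hex : ∃ d, homogeneousComponent d t ≠ 0 := by
    by_contra hcon
    push Not at hcon
    apply ht0
    rw [← sum_homogeneousComponent t]
    exact Finset.sum_eq_zero fun i _ => hcon i
  let d := Nat.find hex
  refine ⟨homogeneousComponent d t, Nat.find_spec hex, ?_⟩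
  intro y b hy hev
  let F : ℝ → ℂ := fun ε => ∑ i ∈ Finset.range (t.totalDegree + 1),
    (ε : ℂ) ^ (i - d) * eval (y ε) (homogeneousComponent i t)
  have hF0 : ∀ᶠ ε : ℝ in 𝓝[>] 0, F ε = 0 := by
    filter_upwards [hev, self_mem_nhdsWithin] with ε h1 h2
    have hε : (ε : ℂ) ≠ 0 := by exact_mod_cast (ne_of_gt h2)
    have h3 : (ε : ℂ) ^ d * F ε = 0 := by
      rw [← h1, ← ht (fun k => ε * y ε k)]
      conv_rhs => rw [← sum_homogeneousComponent t]
      rw [map_sum, Finset.mul_sum]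
      refine Finset.sum_congr rfl fun i _ => ?_
      rw [hom_eval (homogeneousComponent_isHomogeneous i t)]
      by_cases hi : i < d
      · have := Nat.find_min hex hi
        simp only [not_not] at this
        simp [this]
      · rw [← mul_assoc, ← pow_add, Nat.add_sub_cancel' (not_lt.1 hi)]
    exact (mul_eq_zero.1 h3).resolve_left (pow_ne_zero _ hε)
  have hlim : Tendsto F (𝓝[>] 0) (𝓝 (∑ i ∈ Finset.range (t.totalDegree + 1),
    (((0 : ℝ) : ℂ)) ^ (i - d) * eval b (homogeneousComponent i t))) := by
    apply tendsto_finsetSum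
    intro i _
    apply Tendsto.mul
    · apply Tendsto.pow
      exact (Complex.continuous_ofReal.tendsto 0).mono_left nhdsWithin_le_nhds
    · exact ((MvPolynomial.continuous_eval _).tendsto b).comp hy
  have h0 := tendsto_nhds_unique_of_eventuallyEq hlim tendsto_const_nhds hF0
  rw [Finset.sum_eq_single d] at h0
  · simpa using h0
  · intro i _ hi
    rcases lt_or_gt_of_ne hi with hi | hi
    · have := Nat.find_min hex hi
      simp only [not_not] at this
      simp [this]
    · have : i - d ≠ 0 := by omega
      simp [this]
  · intro hd
    rw [Finset.mem_range, not_lt] at hd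
    rw [homogeneousComponent_eq_zero _ _ (by omega)]; simp

lemma twisted_path (M : ℕ) (b : Fin M → ℂ) (q : MvPolynomial (Fin M) ℂ)
    (hq : aeval (fun k : Fin M => Zf k) q = 0) :
    ∃ y : ℝ → Fin M → ℂ, Tendsto y (𝓝[>] 0) (𝓝 b) ∧
      ∀ᶠ ε : ℝ in 𝓝[>] 0,
        eval (fun k : Fin M => (if (k : ℕ) = 0 then 1 else 0) + ε * y ε k) q = 0 := by
  classical
  let p : Fin M → ℕ := fun i => Nat.nth Nat.Prime i
  have hp : ∀ i, (p i).Prime := fun i => Nat.prime_nth_prime i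
  have hpinj : Function.Injective p := fun i j h =>
    Fin.ext (Nat.nth_injective Nat.infinite_setOfPred_prime h)
  let x : Fin M → ℂ := fun i => -Complex.log (p i)
  have hx : Function.Injective x := by
    intro i j h
    simp only [x, neg_inj] at h
    rw [Complex.natCast_log.symm, Complex.natCast_log.symm] at h
    have h2 : Real.log (p i) = Real.log (p j) := by exact_mod_cast h
    have h3 := Real.log_injOn_pos (Set.mem_Ioi.2 (by exact_mod_cast (hp i).pos))
      (Set.mem_Ioi.2 (by exact_mod_cast (hp j).pos)) h2
    exact hpinj (by exact_mod_cast h3)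
  obtain ⟨d, hd⟩ : ∃ d : Fin M → ℂ, ∀ k : Fin M, ∑ i, d i * x i ^ (k : ℕ) = b k := by
    have hdet := Matrix.det_vandermonde_ne_zero_iff.2 hx
    have hu : IsUnit (Matrix.vandermonde x).det := isUnit_iff_ne_zero.2 hdet
    refine ⟨Matrix.vecMul b (Matrix.vandermonde x)⁻¹, fun k => ?_⟩
    have : Matrix.vecMul (Matrix.vecMul b (Matrix.vandermonde x)⁻¹) (Matrix.vandermonde x) = b := by
      rw [Matrix.vecMul_vecMul, Matrix.nonsing_inv_mul _ hu, Matrix.vecMul_one]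
    conv_rhs => rw [← this]
    rfl
  let c : ℕ → ℂ := fun n => ∑ i, if n = p i then d i * (p i : ℂ) ^ (2 : ℂ) else 0
  obtain ⟨R, hR1, hR⟩ : ∃ R : ℝ, 0 < R ∧ ∀ n, ‖c n‖ ≤ R := by
    refine ⟨1 + ∑ i, ‖d i * (p i : ℂ) ^ (2 : ℂ)‖, by positivity, fun n => ?_⟩
    refine (norm_sum_le _ _).trans ?_
    refine le_trans (Finset.sum_le_sum (g := fun i => ‖d i * (p i : ℂ) ^ (2 : ℂ)‖) fun i _ => ?_)
      (by linarith)
    split_ifs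
    · exact le_rfl
    · rw [norm_zero]; exact norm_nonneg _
  let χ : ℝ → ℕ →* ℂ := fun ε => chi (fun p => (ε : ℂ) * c p)
  let T : ℝ → Fin M → ℕ → ℂ := fun ε k n =>
    if n ≤ 1 then 0 else (ε : ℂ)⁻¹ * LSeries.term (tw (χ ε) (Zf k)) 2 n
  have hbd : ∀ ε : ℝ, 0 < ε → ε * R ≤ 1 → ∀ n, 1 < n → ‖χ ε n‖ ≤ ε * R := by
    intro ε he1 he2 n hn
    have h1 := list_bound n.primeFactorsList (fun p => (ε : ℂ) * c p) (ε * R) (by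
      intro p
      rw [norm_mul, Complex.norm_real, Real.norm_of_nonneg he1.le]
      exact mul_le_mul_of_nonneg_left (hR p) he1.le)
    simp only [χ]
    rw [chi_apply _ n (by omega)]
    refine h1.trans ?_
    apply pow_le_of_le_one (by positivity) he2
    intro h
    rw [List.length_eq_zero_iff, Nat.primeFactorsList_eq_nil] at h
    omega
  have hZ : ∀ k : ℕ, Summable (fun n => ‖LSeries.term (Zf k) 2 n‖) := fun k =>
    (Zf_summable k 2 (by norm_num)).norm
  have hterm : ∀ ε k n, LSeries.term (tw (χ ε) (Zf k)) 2 n = χ ε n * LSeries.term (Zf k) 2 n := by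
    intro ε k n
    by_cases h0 : n = 0
    · simp [h0]
    · rw [LSeries.term_of_ne_zero h0, LSeries.term_of_ne_zero h0, tw_apply]; ring
  have hev : ∀ᶠ ε : ℝ in 𝓝[>] 0, 0 < ε ∧ ε * R ≤ 1 := by
    have : ∀ᶠ ε : ℝ in 𝓝[>] 0, ε < 1 / R :=
      mem_nhdsWithin_of_mem_nhds (Iio_mem_nhds (by positivity))
    filter_upwards [this, self_mem_nhdsWithin] with ε h1 h2
    exact ⟨h2, by rw [lt_div_iff₀ hR1] at h1; exact h1.le⟩
  have hTbd : ∀ ε : ℝ, 0 < ε → ε * R ≤ 1 → ∀ k n, ‖T ε k n‖ ≤ R * ‖LSeries.term (Zf k) 2 n‖ := by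
    intro ε h1 h2 k n
    simp only [T]
    split_ifs with hn
    · simp; positivity
    · rw [hterm, ← mul_assoc, norm_mul]
      refine mul_le_mul_of_nonneg_right ?_ (norm_nonneg _)
      rw [norm_mul, norm_inv, Complex.norm_real, Real.norm_of_nonneg h1.le]
      have := hbd ε h1 h2 n (by omega)
      rw [inv_mul_le_iff₀ h1]; exact this
  refine ⟨fun ε k => ∑' n, T ε k n, ?_, ?_⟩
  · rw [tendsto_pi_nhds]
    intro k
    let L : ℕ → ℂ := fun n => if n.Prime then c n * LSeries.term (Zf k) 2 n else 0
    have hL : ∑' n, L n = b k := by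
      rw [tsum_eq_sum (s := Finset.univ.image p)]
      · rw [Finset.sum_image (fun i _ j _ h => hpinj h), ← hd k]
        refine Finset.sum_congr rfl fun i _ => ?_
        have hi0 : p i ≠ 0 := (hp i).ne_zero
        have hci : c (p i) = d i * (p i : ℂ) ^ (2 : ℂ) := by
          simp only [c]
          rw [Finset.sum_eq_single i]
          · simp
          · intro j _ hj
            rw [if_neg]
            exact fun h => hj (hpinj h.symm)
          · simp
        simp only [L, if_pos (hp i)]
        rw [hci, LSeries.term_of_ne_zero hi0, Zf_apply _ _ hi0]
        have : (p i : ℂ) ^ (2 : ℂ) ≠ 0 := by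
          simp [hi0]
        field_simp
        rfl
      · intro n hn
        have : c n = 0 := by
          simp only [c]
          apply Finset.sum_eq_zero
          intro i _
          rw [if_neg]
          rintro rfl
          exact hn (Finset.mem_image_of_mem _ (Finset.mem_univ _))
        simp [L, this]
    rw [← hL]
    refine tendsto_tsum_of_dominated_convergence (bound := fun n => R * ‖LSeries.term (Zf k) 2 n‖)
      ((hZ k).mul_left R) ?_ ?_
    · intro n
      by_cases hn : n ≤ 1
      · have : ¬ n.Prime := fun h => by have := h.two_le; omega
        simp only [T, L, if_pos hn, if_neg this]
        exact tendsto_const_nhds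
      have hn0 : n ≠ 0 := by omega
      simp only [T, if_neg hn, hterm, χ, chi_smul _ _ n hn0]
      have hlen : n.primeFactorsList.length ≠ 0 := by
        intro h
        rw [List.length_eq_zero_iff, Nat.primeFactorsList_eq_nil] at h
        omega
      obtain ⟨l, hl⟩ := Nat.exists_eq_succ_of_ne_zero hlen
      have hev2 : (fun ε : ℝ => (ε : ℂ) ^ l * (chi c n * LSeries.term (Zf k) 2 n)) =ᶠ[𝓝[>] 0]
          (fun ε : ℝ => (ε : ℂ)⁻¹ * ((ε : ℂ) ^ n.primeFactorsList.length * chi c n *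
            LSeries.term (Zf k) 2 n)) := by
        filter_upwards [self_mem_nhdsWithin] with ε h2
        have hε : (ε : ℂ) ≠ 0 := by exact_mod_cast (ne_of_gt h2)
        rw [hl, Nat.succ_eq_add_one]
        field_simp
        ring
      refine Tendsto.congr' hev2 ?_
      have h1 : Tendsto (fun ε : ℝ => (ε : ℂ) ^ l) (𝓝[>] 0) (𝓝 (((0 : ℝ) : ℂ) ^ l)) := by
        apply Tendsto.pow
        exact (Complex.continuous_ofReal.tendsto 0).mono_left nhdsWithin_le_nhds
      have h2 := h1.mul_const (chi c n * LSeries.term (Zf k) 2 n)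
      convert h2 using 2
      simp only [L]
      split_ifs with hpr
      · have hf := Nat.primeFactorsList_prime hpr
        have : l = 0 := by rw [hf] at hl; simp at hl; omega
        rw [this, chi_apply c n hn0, hf]; simp
      · have : l ≠ 0 := by
          rintro rfl
          apply hpr
          obtain ⟨r, hr⟩ := List.length_eq_one_iff.1 hl
          have h3 := Nat.prod_primeFactorsList hn0
          rw [hr] at h3
          simp only [List.prod_cons, List.prod_nil, mul_one] at h3
          rw [← h3]
          apply Nat.prime_of_mem_primeFactorsList (n := n)
          rw [hr]; simp
        simp [this]
    · filter_upwards [hev] with ε hε n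
      exact hTbd ε hε.1 hε.2 k n
  · filter_upwards [hev] with ε hε
    have hε0 : (ε : ℂ) ≠ 0 := by exact_mod_cast (ne_of_gt hε.1)
    have hTs : ∀ k, Summable (T ε k) := fun k =>
      Summable.of_norm_bounded ((hZ k).mul_left R) (hTbd ε hε.1 hε.2 k)
    have hone : ∀ k : Fin M, HasSum (fun n => if n = 1 then (if (k : ℕ) = 0 then (1 : ℂ) else 0) else 0)
        (if (k : ℕ) = 0 then (1 : ℂ) else 0) := fun k => hasSum_ite_eq 1 _
    have hsum : ∀ k : Fin M, HasSum (LSeries.term (tw (χ ε) (Zf k)) 2)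
        ((if (k : ℕ) = 0 then (1 : ℂ) else 0) + ε * ∑' n, T ε k n) := by
      intro k
      have := (hone k).add ((hTs k).hasSum.mul_left (ε : ℂ))
      convert this using 1
      ext n
      by_cases h0 : n = 0
      · simp [h0, T]
      by_cases h1 : n = 1
      · subst h1
        rw [hterm, LSeries.term_of_ne_zero one_ne_zero, Zf_apply _ _ one_ne_zero]
        by_cases hk : (k : ℕ) = 0
        · simp [T, hk]
        · simp [T, hk]
      · have : ¬ n ≤ 1 := by omega
        simp only [h1, if_false, T, this]
        field_simp
        simp
    have h1 := (LS_aeval 2 (fun k : Fin M => tw (χ ε) (Zf k)) (fun k => (hsum k).summable) q).2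
    have h2 : aeval (fun k : Fin M => tw (χ ε) (Zf k)) q = 0 := by
      have := congrArg (tw (χ ε)) hq
      rw [map_zero, ← AlgHom.comp_apply, comp_aeval] at this
      exact this
    rw [h2] at h1
    have h3 : (fun k : Fin M => LSeries (tw (χ ε) (Zf k)) 2) =
        fun k : Fin M => (if (k : ℕ) = 0 then (1 : ℂ) else 0) + ε * ∑' n, T ε k n := by
      ext k
      exact (hsum k).tsum_eq
    rw [h3] at h1
    have h4 : LSeries ((0 : ArithmeticFunction ℂ) : ℕ → ℂ) 2 = 0 := by
      have : ((0 : ArithmeticFunction ℂ) : ℕ → ℂ) = 0 := by ext; simp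
      rw [this, LSeries_zero]; rfl
    rw [h4] at h1
    rw [← coe_aeval_eq_eval]
    exact h1.symm

lemma Zf_indep (M : ℕ) (q : MvPolynomial (Fin M) ℂ) (hq : q ≠ 0) :
    aeval (fun k : Fin M => Zf k) q ≠ 0 := by
  intro h0
  obtain ⟨h, hh, H⟩ := tangent q hq (fun k => if (k : ℕ) = 0 then 1 else 0)
  apply hh
  apply MvPolynomial.funext
  intro b
  obtain ⟨y, hy1, hy2⟩ := twisted_path M b q h0
  rw [H y b hy1 hy2, map_zero]

lemma leading (M : ℕ) (q : MvPolynomial (Fin M) ℂ) (hq : q ≠ 0) :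
    ∃ N : ℕ, 0 < N ∧ ∃ c : ℂ, c ≠ 0 ∧ Tendsto (fun x : ℝ => (N : ℂ) ^ (x : ℂ) *
      eval (fun k : Fin M => iteratedDeriv k riemannZeta x) q) atTop (𝓝 c) := by
  classical
  set F := aeval (fun k : Fin M => Zf k) q with hF
  have hF0 : F ≠ 0 := Zf_indep M q hq
  have hex : ∃ n, F n ≠ 0 := by
    by_contra h
    push Not at h
    exact hF0 (ArithmeticFunction.ext (by simpa using h))
  have h0 : Nat.find hex ≠ 0 := by
    intro h
    have := Nat.find_spec hex
    rw [h] at this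
    simp at this
  obtain ⟨N, hN⟩ := Nat.exists_eq_succ_of_ne_zero h0
  refine ⟨N + 1, by omega, F (N + 1), ?_, ?_⟩
  · have := Nat.find_spec hex
    rwa [hN] at this
  · have h1 := LSeries.tendsto_cpow_mul_atTop (f := F) (n := N) (fun m hm => by
      by_contra hne
      exact Nat.find_min hex (m := m) (by omega) hne) (by
      have h2 := (LS_aeval 2 (fun k : Fin M => Zf k)
        (fun k => Zf_summable k 2 (by norm_num)) q).1
      exact h2.abscissaOfAbsConv_le.trans_lt (EReal.coe_lt_top _))
    refine Tendsto.congr' ?_ h1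
    filter_upwards [eventually_gt_atTop 1] with x hx
    have hx' : 1 < (x : ℂ).re := by simpa using hx
    rw [(LS_aeval x (fun k : Fin M => Zf k) (fun k => Zf_summable k x hx') q).2]
    push_cast
    congr 1
    rw [← coe_aeval_eq_eval]
    simp only [Zf_zeta _ _ hx']
    rfl
open Filter Topology MvPolynomial
open MeasureTheory Asymptotics

lemma log_pow_bound (n : ℕ) (ε : ℝ) (hε : 0 < ε) :
    ∃ K : ℝ, 0 < K ∧ ∀ x : ℝ, 0 < x → |Real.log x ^ n| ≤ K * (x ^ ε + x⁻¹) := by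
  set δ : ℝ := ε / (n + 1) with hδ
  have hδ0 : 0 < δ := by positivity
  refine ⟨(1 / δ) ^ n + (n + 1) ^ n, by positivity, fun x hx => ?_⟩
  have hx1 : 0 < x ^ ε := by positivity
  have hx2 : 0 < x⁻¹ := by positivity
  have hn1 : (0 : ℝ) < n + 1 := by positivity
  rw [abs_pow]
  rcases le_total 1 x with h1 | h1
  · have hl : |Real.log x| ≤ x ^ δ / δ := by
      rw [abs_of_nonneg (Real.log_nonneg h1)]
      exact Real.log_le_rpow_div hx.le hδ0
    have h2 : |Real.log x| ^ n ≤ x ^ ε * (1 / δ) ^ n := by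
      refine (pow_le_pow_left₀ (abs_nonneg _) hl n).trans ?_
      rw [div_eq_mul_one_div, mul_pow]
      refine mul_le_mul_of_nonneg_right ?_ (by positivity)
      rw [← Real.rpow_mul_natCast hx.le]
      apply Real.rpow_le_rpow_of_exponent_le h1
      rw [hδ, div_mul_eq_mul_div, div_le_iff₀ hn1]
      nlinarith
    have h3 : 0 ≤ (1 / δ) ^ n := by positivity
    have h4 : (0 : ℝ) ≤ (n + 1) ^ n := by positivity
    nlinarith [mul_nonneg h3 hx2.le, mul_nonneg h4 hx2.le, mul_nonneg h4 hx1.le]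
  · have h1' : 1 ≤ x⁻¹ := (one_le_inv₀ hx).2 h1
    have hl : |Real.log x| ≤ x⁻¹ ^ ((1 : ℝ) / (n + 1)) / (1 / (n + 1)) := by
      rw [abs_of_nonpos (Real.log_nonpos hx.le h1), ← Real.log_inv]
      exact Real.log_le_rpow_div hx2.le (by positivity)
    have h2 : |Real.log x| ^ n ≤ x⁻¹ * (n + 1) ^ n := by
      refine (pow_le_pow_left₀ (abs_nonneg _) hl n).trans ?_
      rw [div_div_eq_mul_div, div_one, mul_pow]
      refine mul_le_mul_of_nonneg_right ?_ (by positivity)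
      rw [← Real.rpow_mul_natCast hx2.le]
      conv_rhs => rw [← Real.rpow_one x⁻¹]
      apply Real.rpow_le_rpow_of_exponent_le h1'
      rw [div_mul_eq_mul_div, div_le_iff₀ hn1]
      linarith
    have h3 : 0 ≤ (1 / δ) ^ n := by positivity
    have h4 : (0 : ℝ) ≤ (n + 1) ^ n := by positivity
    nlinarith [mul_nonneg h3 hx2.le, mul_nonneg h3 hx1.le, mul_nonneg h4 hx1.le]

noncomputable def gf (n : ℕ) (t : ℝ) : ℂ := ((Real.log t ^ n * Real.exp (-t) : ℝ) : ℂ)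

lemma gf_deriv (n : ℕ) (s : ℂ) (hs : 1 < s.re) :
    HasDerivAt (mellin (gf n)) (mellin (gf (n + 1)) s) s := by
  obtain ⟨K, hK, hb⟩ := log_pow_bound n 1 one_pos
  have h := (mellin_hasDerivAt_of_isBigO_rpow (E := ℂ) (f := gf n) (s := s) (a := s.re + 1) (b := 1)
    ?_ ?_ (lt_add_one _) ?_ hs).2
  · have he : (fun t => Real.log t • gf n t) = gf (n + 1) := by
      ext t
      simp only [gf, Complex.real_smul]
      push_cast
      ring
    rw [he] at h
    exact h
  · refine ContinuousOn.locallyIntegrableOn ?_ measurableSet_Ioi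
    refine Complex.continuous_ofReal.comp_continuousOn ?_
    refine ContinuousOn.mul (ContinuousOn.pow ?_ _) (by fun_prop)
    exact Real.continuousOn_log.mono fun x hx => ne_of_gt hx
  · have h1 : (gf n) =O[atTop] fun t : ℝ => t * Real.exp (-1 * t) := by
      refine IsBigO.of_bound (K * 2) ?_
      filter_upwards [eventually_ge_atTop 1] with t ht
      have := hb t (by linarith)
      rw [gf, Complex.norm_real, Real.norm_eq_abs, abs_mul, Real.norm_eq_abs, abs_mul,
        abs_of_pos (Real.exp_pos _), abs_of_pos (Real.exp_pos _), abs_of_pos (by linarith : 0 < t),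
        ← mul_assoc, neg_one_mul]
      refine mul_le_mul_of_nonneg_right (this.trans ?_) (Real.exp_pos _).le
      rw [Real.rpow_one, mul_assoc]
      refine mul_le_mul_of_nonneg_left ?_ hK.le
      have : t⁻¹ ≤ 1 := inv_le_one_of_one_le₀ ht
      linarith
    refine h1.trans ?_
    have h2 := (isLittleO_exp_neg_mul_rpow_atTop one_pos (-(s.re + 1) - 1)).isBigO
    have h3 := (isBigO_refl (fun t : ℝ => t) atTop).mul h2
    refine h3.congr' EventuallyEq.rfl ?_
    filter_upwards [eventually_gt_atTop 0] with t ht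
    rw [Real.rpow_sub_one ht.ne']
    field_simp
  · refine IsBigO.of_bound (K * 2) ?_
    have : ∀ᶠ t : ℝ in 𝓝[>] 0, t < 1 := mem_nhdsWithin_of_mem_nhds (Iio_mem_nhds one_pos)
    filter_upwards [this, self_mem_nhdsWithin] with t ht ht0
    have ht0 : 0 < t := ht0
    have h1 := hb t ht0
    have hi : 1 ≤ t⁻¹ := (one_le_inv₀ ht0).2 ht.le
    rw [gf, Complex.norm_real, Real.norm_eq_abs, abs_mul, Real.norm_eq_abs,
      abs_of_pos (Real.exp_pos _), Real.rpow_neg_one, abs_of_pos (inv_pos.2 ht0)]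
    have he : Real.exp (-t) ≤ 1 := Real.exp_le_one_iff.2 (by linarith)
    refine (mul_le_of_le_one_right (abs_nonneg _) he).trans (h1.trans ?_)
    rw [Real.rpow_one, mul_assoc]
    refine mul_le_mul_of_nonneg_left ?_ hK.le
    linarith

lemma iter_Gamma (n : ℕ) (s : ℂ) (hs : 1 < s.re) :
    iteratedDeriv n Complex.Gamma s = mellin (gf n) s := by
  induction n generalizing s with
  | zero =>
    rw [iteratedDeriv_zero, Complex.Gamma_eq_integral (by linarith),
      Complex.GammaIntegral_eq_mellin]
    congr 1
    ext t; simp [gf]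
  | succ n ih =>
    rw [iteratedDeriv_succ]
    have : iteratedDeriv n Complex.Gamma =ᶠ[𝓝 s] mellin (gf n) := by
      filter_upwards [(isOpen_lt continuous_const Complex.continuous_re).mem_nhds hs] with z hz
      exact ih z hz
    rw [this.deriv_eq]
    exact (gf_deriv n s hs).deriv

noncomputable def Jf (n : ℕ) (s : ℝ) : ℝ :=
  ∫ x in Set.Ioi (0 : ℝ), Real.log x ^ n * (Real.exp (-x) * x ^ (s - 1))

lemma iter_Gamma_real (n : ℕ) (s : ℝ) (hs : 1 < s) :
    iteratedDeriv n Complex.Gamma s = (Jf n s : ℂ) := by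
  rw [iter_Gamma n s (by simpa using hs), mellin, Jf, ← integral_complex_ofReal]
  refine setIntegral_congr_fun measurableSet_Ioi fun x hx => ?_
  have hx : 0 < x := hx
  simp only [gf, smul_eq_mul]
  push_cast [Complex.ofReal_cpow hx.le]
  ring

lemma J_int (n : ℕ) (s : ℝ) (hs : 1 < s) :
    IntegrableOn (fun x : ℝ => Real.log x ^ n * (Real.exp (-x) * x ^ (s - 1))) (Set.Ioi 0) := by
  obtain ⟨K, hK, hb⟩ := log_pow_bound n 1 one_pos
  have h1 := Real.GammaIntegral_convergent (s := s + 1) (by linarith)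
  have h2 := Real.GammaIntegral_convergent (s := s - 1) (by linarith)
  refine Integrable.mono' ((h1.add h2).const_mul K) ?_ ?_
  · refine ContinuousOn.aestronglyMeasurable ?_ measurableSet_Ioi
    refine ContinuousOn.mul (ContinuousOn.pow ?_ _) (ContinuousOn.mul (by fun_prop) ?_)
    · exact Real.continuousOn_log.mono fun x hx => ne_of_gt hx
    · exact fun x hx => (Real.continuousAt_rpow_const _ _ (Or.inl (ne_of_gt hx))).continuousWithinAt
  · refine (ae_restrict_iff' measurableSet_Ioi).2 (Eventually.of_forall fun x hx => ?_)
    have hx : 0 < x := hx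
    have hp : 0 < Real.exp (-x) * x ^ (s - 1) := by positivity
    rw [norm_mul, Real.norm_eq_abs, Real.norm_of_nonneg hp.le]
    refine (mul_le_mul_of_nonneg_right (hb x hx) hp.le).trans (le_of_eq ?_)
    simp only [Pi.add_apply]
    rw [show s + 1 - 1 = (s - 1) + 1 by ring, Real.rpow_add_one hx.ne', Real.rpow_sub_one hx.ne' (s - 1),
      Real.rpow_one]
    field_simp

noncomputable def wf (n : ℕ) (s : ℝ) : ℝ := Jf n s / Real.Gamma s

lemma Gamma_sub_one (s : ℝ) (hs : 1 < s) : Real.Gamma (s - 1) = Real.Gamma s / (s - 1) := by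
  have := Real.Gamma_add_one (s := s - 1) (by linarith)
  rw [sub_add_cancel] at this
  rw [this]
  have : s - 1 ≠ 0 := by linarith
  field_simp

lemma wf_lower (n : ℕ) (hn : 1 ≤ n) : Tendsto (wf n) atTop atTop := by
  rw [tendsto_atTop]
  intro M0
  set M := |M0| + 1 with hM
  have hM1 : 1 ≤ M := by have := abs_nonneg M0; linarith
  have hM0 : M0 + 1 ≤ M := by have := le_abs_self M0; linarith
  obtain ⟨K, hK, hb⟩ := log_pow_bound n 1 one_pos
  set E := Real.exp M with hE
  have hE0 : 0 < E := Real.exp_pos _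
  have hptw : ∃ Q : ℝ, 0 < Q ∧ ∀ x : ℝ, 0 < x → M - Q * x⁻¹ ≤ Real.log x ^ n := by
    refine ⟨M * E + K * (E ^ 2 + 1), by positivity, fun x hx => ?_⟩
    have hxi : 0 < x⁻¹ := inv_pos.2 hx
    rcases le_total E x with h | h
    · have h1 : M ≤ Real.log x := (Real.le_log_iff_exp_le hx).2 h
      have h2 : M ≤ Real.log x ^ n :=
        h1.trans (le_self_pow₀ (hM1.trans h1) (by omega))
      have : 0 ≤ (M * E + K * (E ^ 2 + 1)) * x⁻¹ := by positivity
      linarith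
    · have h1 := hb x hx
      rw [Real.rpow_one] at h1
      have h2 := neg_abs_le (Real.log x ^ n)
      have h3 : M ≤ M * E * x⁻¹ := by
        rw [← div_eq_mul_inv, le_div_iff₀ hx]
        exact mul_le_mul_of_nonneg_left h (by linarith)
      have h4 : x ≤ E ^ 2 * x⁻¹ := by
        rw [← div_eq_mul_inv, le_div_iff₀ hx]
        nlinarith
      nlinarith
  obtain ⟨Q, hQ, hpt⟩ := hptw
  filter_upwards [eventually_gt_atTop (Q + 2)] with s hs
  have hs1 : 1 < s := by linarith
  have hG : 0 < Real.Gamma s := Real.Gamma_pos_of_pos (by linarith)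
  have h1 := Real.GammaIntegral_convergent (s := s) (by linarith)
  have h2 := Real.GammaIntegral_convergent (s := s - 1) (by linarith)
  have hle : M * Real.Gamma s - Q * Real.Gamma (s - 1) ≤ Jf n s := by
    rw [Real.Gamma_eq_integral (by linarith : 0 < s), Real.Gamma_eq_integral (by linarith : 0 < s - 1),
      ← integral_const_mul, ← integral_const_mul, ← integral_sub (h1.const_mul M) (h2.const_mul Q)]
    refine setIntegral_mono_on ((h1.const_mul M).sub (h2.const_mul Q)) (J_int n s hs1)
      measurableSet_Ioi fun x hx => ?_
    have hx : 0 < x := hx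
    have hp : 0 < Real.exp (-x) * x ^ (s - 1) := by positivity
    refine le_trans (le_of_eq ?_) (mul_le_mul_of_nonneg_right (hpt x hx) hp.le)
    rw [Real.rpow_sub_one hx.ne' (s - 1)]
    field_simp
  rw [wf, le_div_iff₀ hG]
  refine le_trans ?_ hle
  rw [Gamma_sub_one s hs1]
  have h5 : Q * (Real.Gamma s / (s - 1)) ≤ Real.Gamma s := by
    rw [← mul_div_assoc, div_le_iff₀ (by linarith)]
    nlinarith
  nlinarith

lemma wf_upper (n : ℕ) (ε : ℝ) (h0 : 0 < ε) (h1 : ε < 1) :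
    wf n =O[atTop] fun s : ℝ => s ^ ε := by
  obtain ⟨K, hK, hb⟩ := log_pow_bound n ε h0
  refine IsBigO.of_bound (K * 2) ?_
  filter_upwards [eventually_gt_atTop 2] with s hs
  have hs1 : 1 < s := by linarith
  have hG : 0 < Real.Gamma s := Real.Gamma_pos_of_pos (by linarith)
  have i1 := Real.GammaIntegral_convergent (s := s + ε) (by linarith)
  have i2 := Real.GammaIntegral_convergent (s := s - 1) (by linarith)
  have hle : |Jf n s| ≤ K * (Real.Gamma (s + ε) + Real.Gamma (s - 1)) := by
    rw [Real.Gamma_eq_integral (by linarith : 0 < s + ε),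
      Real.Gamma_eq_integral (by linarith : 0 < s - 1),
      ← integral_add i1 i2, ← integral_const_mul, ← Real.norm_eq_abs]
    refine (norm_integral_le_integral_norm _).trans ?_
    refine setIntegral_mono_on (J_int n s hs1).norm ((i1.add i2).const_mul K)
      measurableSet_Ioi fun x hx => ?_
    have hx : 0 < x := hx
    have hp : 0 < Real.exp (-x) * x ^ (s - 1) := by positivity
    rw [norm_mul, Real.norm_eq_abs, Real.norm_of_nonneg hp.le]
    refine (mul_le_mul_of_nonneg_right (hb x hx) hp.le).trans (le_of_eq ?_)
    rw [show s + ε - 1 = (s - 1) + ε by ring, Real.rpow_add hx, Real.rpow_sub_one hx.ne' (s - 1)]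
    field_simp
  have hc : Real.Gamma (s + ε) ≤ Real.Gamma s * s ^ ε := by
    have := Real.Gamma_mul_add_mul_le_rpow_Gamma_mul_rpow_Gamma (s := s) (t := s + 1) (a := 1 - ε)
      (b := ε) (by linarith) (by linarith) (by linarith) h0 (by ring)
    rw [show (1 - ε) * s + ε * (s + 1) = s + ε by ring, Real.Gamma_add_one (by linarith),
      Real.mul_rpow (by linarith) hG.le] at this
    refine this.trans (le_of_eq ?_)
    rw [mul_comm (s ^ ε), ← mul_assoc, ← Real.rpow_add hG]
    simp
  have hse : 1 ≤ s ^ ε := Real.one_le_rpow hs1.le h0.le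
  have hd : Real.Gamma (s - 1) ≤ Real.Gamma s * s ^ ε := by
    rw [Gamma_sub_one s hs1]
    refine (div_le_self hG.le (by linarith)).trans ?_
    exact le_mul_of_one_le_right hG.le hse
  rw [wf, norm_div, Real.norm_of_nonneg hG.le, div_le_iff₀ hG, Real.norm_eq_abs,
    Real.norm_of_nonneg (by linarith)]
  refine hle.trans ?_
  nlinarith

lemma wf_pow (n k : ℕ) : (fun s => wf n s ^ k) =O[atTop] fun s : ℝ => s := by
  by_cases hk : k = 0
  · subst hk
    simp only [pow_zero]
    exact (isLittleO_const_id_atTop (1 : ℝ)).isBigO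
  have hk1 : (0 : ℝ) < k := by positivity
  have h := (wf_upper n (1 / (k + 1)) (by positivity) (by
    rw [div_lt_one (by positivity)]; linarith)).pow k
  refine h.trans ?_
  refine IsBigO.of_bound 1 ?_
  filter_upwards [eventually_gt_atTop 1] with s hs
  have hs0 : 0 < s := by linarith
  rw [← Real.rpow_mul_natCast hs0.le, Real.norm_of_nonneg (by positivity), Real.norm_of_nonneg hs0.le,
    one_mul]
  conv_rhs => rw [← Real.rpow_one s]
  apply Real.rpow_le_rpow_of_exponent_le hs.le
  rw [div_mul_eq_mul_div, div_le_iff₀ (by positivity)]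
  linarith

lemma Gamma_lower (T s : ℝ) (hT : 0 < T) (hs : 1 < s) :
    Real.exp (-T) * T ^ (s - 1) ≤ Real.Gamma s := by
  have h1 := Real.GammaIntegral_convergent (s := s) (by linarith)
  have hsub : Set.Ioi T ⊆ Set.Ioi (0 : ℝ) := Set.Ioi_subset_Ioi hT.le
  rw [Real.Gamma_eq_integral (by linarith), ← integral_exp_neg_Ioi T, ← integral_mul_const]
  refine le_trans ?_ (setIntegral_mono_set h1 ?_ hsub.eventuallyLE)
  · refine setIntegral_mono_on ((integrableOn_exp_neg_Ioi T).mul_const _) (h1.mono_set hsub)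
      measurableSet_Ioi fun x hx => ?_
    exact mul_le_mul_of_nonneg_left
      (Real.rpow_le_rpow hT.le (le_of_lt hx) (by linarith)) (Real.exp_pos _).le
  · refine (ae_restrict_iff' measurableSet_Ioi).2 (Eventually.of_forall fun x hx => ?_)
    have hx : 0 < x := hx
    simp only [Pi.zero_apply]
    positivity

lemma Gamma_big (Q : ℝ) (hQ : 0 < Q) : (fun s : ℝ => Q ^ s) =o[atTop] Real.Gamma := by
  have hT : 0 < 2 * Q := by positivity
  have h1 : (fun s : ℝ => (2 * Q) ^ s) =O[atTop] Real.Gamma := by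
    refine IsBigO.of_bound (2 * Q * Real.exp (2 * Q)) ?_
    filter_upwards [eventually_gt_atTop 1] with s hs
    have := Gamma_lower (2 * Q) s hT hs
    rw [Real.norm_of_nonneg (by positivity),
      Real.norm_of_nonneg (Real.Gamma_pos_of_pos (by linarith)).le]
    have h2 : (2 * Q) ^ s = 2 * Q * Real.exp (2 * Q) * (Real.exp (-(2 * Q)) * (2 * Q) ^ (s - 1)) := by
      rw [Real.rpow_sub_one hT.ne', Real.exp_neg]
      field_simp
    rw [h2]
    exact mul_le_mul_of_nonneg_left this (by positivity)
  refine IsLittleO.trans_isBigO ?_ h1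
  rw [isLittleO_iff_tendsto' (Eventually.of_forall fun s h => by
    have : (2 * Q) ^ s ≠ 0 := by positivity
    contradiction)]
  have h3 : (fun s : ℝ => Q ^ s / (2 * Q) ^ s) = fun s : ℝ => (1 / 2 : ℝ) ^ s := by
    ext s
    rw [← Real.div_rpow hQ.le hT.le]
    congr 1
    field_simp
  rw [h3]
  exact tendsto_rpow_atTop_of_base_lt_one _ (by norm_num) (by norm_num)

/-- the comparison functions -/
noncomputable def gk (n d N A B : ℕ) (s : ℝ) : ℝ :=
  Real.Gamma s ^ d * ((N : ℝ) ^ s)⁻¹ * s ^ A * wf n s ^ B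

lemma one_isBigO_pow {f : ℝ → ℝ} (hf : Tendsto f atTop atTop) (k : ℕ) :
    (fun _ => (1 : ℝ)) =O[atTop] fun s => f s ^ k := by
  refine IsBigO.of_bound 1 ?_
  filter_upwards [hf.eventually_ge_atTop 1] with s hs
  rw [norm_one, one_mul, norm_pow, Real.norm_of_nonneg (by linarith)]
  exact one_le_pow₀ hs

lemma pow_isLittleO_pow {f : ℝ → ℝ} (hf : Tendsto f atTop atTop) {j k : ℕ} (h : j < k) :
    (fun s => f s ^ j) =o[atTop] fun s => f s ^ k :=
  (isLittleO_pow_pow_atTop_of_lt h).comp_tendsto hf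

lemma Gamma_tendsto : Tendsto Real.Gamma atTop atTop := by
  have h := Gamma_big 2 two_pos
  refine tendsto_atTop_mono' _ ?_ (tendsto_rpow_atTop_of_base_gt_one 2 (by norm_num))
  filter_upwards [h.bound one_pos, eventually_gt_atTop 0] with s h1 h2
  rwa [one_mul, Real.norm_of_nonneg (by positivity),
    Real.norm_of_nonneg (Real.Gamma_pos_of_pos h2).le] at h1

lemma sw_bound (n A B : ℕ) : (fun s : ℝ => s ^ A * wf n s ^ B) =O[atTop] fun s : ℝ => s ^ (A + 1) := by
  simp only [pow_succ]
  exact (isBigO_refl _ _).mul (wf_pow n B)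

lemma sw_lower (n A B : ℕ) (hn : 1 ≤ n) :
    (fun _ : ℝ => (1 : ℝ)) =O[atTop] fun s : ℝ => s ^ A * wf n s ^ B := by
  have := (one_isBigO_pow tendsto_id A).mul (one_isBigO_pow (wf_lower n hn) B)
  simpa using this

lemma gk_lt_B (n d N A B B' : ℕ) (hn : 1 ≤ n) (h : B < B') : gk n d N A B =o[atTop] gk n d N A B' :=
  (isBigO_refl _ _).mul_isLittleO (pow_isLittleO_pow (wf_lower n hn) h)

lemma gk_lt_A (n d N A A' B B' : ℕ) (hn : 1 ≤ n) (h : A < A') :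
    gk n d N A B =o[atTop] gk n d N A' B' := by
  have key : (fun s : ℝ => s ^ A * wf n s ^ B) =o[atTop] fun s : ℝ => s ^ A' * wf n s ^ B' := by
    obtain ⟨e, rfl⟩ := Nat.exists_eq_add_of_lt h
    have h1 : (fun s : ℝ => wf n s ^ B) =o[atTop] fun s : ℝ => s ^ (e + 1) := by
      have h2 := wf_pow n (2 * B)
      have h3 : (fun s : ℝ => wf n s ^ B) =o[atTop] fun s : ℝ => s := by
        have h4 : (fun s : ℝ => wf n s ^ B) =o[atTop] fun s : ℝ => wf n s ^ (B + 1) :=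
          pow_isLittleO_pow (wf_lower n hn) (by omega)
        exact h4.trans_isBigO (wf_pow n (B + 1))
      refine h3.trans_isBigO ?_
      have := (one_isBigO_pow (tendsto_id (α := ℝ)) e).mul (isBigO_refl (fun s : ℝ => s) atTop)
      simpa [pow_succ] using this
    have h5 := ((isBigO_refl (fun s : ℝ => s ^ A) atTop).mul_isLittleO h1).mul_isBigO
      (one_isBigO_pow (wf_lower n hn) B')
    refine h5.congr ?_ ?_
    · intro s; ring
    · intro s; ring
  have := (isBigO_refl (fun s : ℝ => Real.Gamma s ^ d * ((N : ℝ) ^ s)⁻¹) atTop).mul_isLittleO key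
  refine this.congr ?_ ?_ <;> intro s <;> simp only [gk] <;> ring

lemma pow_lt_exp (k : ℕ) (Q : ℝ) (hQ : 1 < Q) : (fun s : ℝ => s ^ k) =o[atTop] fun s : ℝ => Q ^ s := by
  have h := isLittleO_pow_exp_pos_mul_atTop k (Real.log_pos hQ)
  refine h.congr (fun _ => rfl) fun s => ?_
  rw [Real.rpow_def_of_pos (by linarith)]

lemma gk_lt_N (n d N N' A A' B B' : ℕ) (hn : 1 ≤ n) (hN : 0 < N') (h : N' < N) :
    gk n d N A B =o[atTop] gk n d N' A' B' := by
  have hN0 : (0 : ℝ) < N' := by exact_mod_cast hN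
  have hN1 : (N' : ℝ) < N := by exact_mod_cast h
  have hN2 : (0 : ℝ) < N := by linarith
  have h1 := pow_lt_exp (A + 1) (N / N') ((one_lt_div hN0).2 hN1)
  have h2 := ((sw_bound n A B).trans_isLittleO h1).mul_isBigO (sw_lower n A' B' hn)
  have := (isBigO_refl (fun s : ℝ => Real.Gamma s ^ d * ((N : ℝ) ^ s)⁻¹) atTop).mul_isLittleO h2
  refine this.congr ?_ ?_ <;> intro s <;> simp only [gk]
  · ring
  · rw [Real.div_rpow hN2.le hN0.le]
    have : (N : ℝ) ^ s ≠ 0 := by positivity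
    field_simp

lemma gk_lt_d (n d d' N N' A A' B B' : ℕ) (hn : 1 ≤ n) (hN : 0 < N) (hN' : 0 < N') (h : d < d') :
    gk n d N A B =o[atTop] gk n d' N' A' B' := by
  have hN0 : (0 : ℝ) < N' := by exact_mod_cast hN'
  have hN1 : (1 : ℝ) ≤ N := by exact_mod_cast hN
  obtain ⟨e, rfl⟩ := Nat.exists_eq_add_of_lt h
  have h1 := (sw_bound n A B).trans_isLittleO (pow_lt_exp (A + 1) 2 (by norm_num))
  have h2 : (fun s : ℝ => ((N : ℝ) ^ s)⁻¹) =O[atTop] fun _ => (1 : ℝ) := by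
    refine IsBigO.of_bound 1 ?_
    filter_upwards [eventually_gt_atTop 0] with s hs
    rw [norm_inv, norm_one, mul_one, Real.norm_of_nonneg (by positivity)]
    exact inv_le_one_of_one_le₀ (Real.one_le_rpow hN1 hs.le)
  have h3 := Gamma_big (2 * N') (by positivity)
  have h4 := (h2.mul_isLittleO h1).mul_isBigO (isBigO_refl (fun s : ℝ => (N' : ℝ) ^ s) atTop)
  have h5 : (fun s : ℝ => ((N : ℝ) ^ s)⁻¹ * (s ^ A * wf n s ^ B) * (N' : ℝ) ^ s) =o[atTop]
      Real.Gamma := by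
    refine h4.trans_isBigO (IsBigO.trans ?_ h3.isBigO)
    refine (isBigO_refl _ _).congr (fun _ => rfl) fun s => ?_
    rw [Real.mul_rpow (by norm_num) hN0.le]; ring
  have h6 := ((h5.mul_isBigO (one_isBigO_pow Gamma_tendsto e)).mul_isBigO
    (sw_lower n A' B' hn)).mul_isBigO (isBigO_refl (fun s : ℝ => ((N' : ℝ) ^ s)⁻¹) atTop)
  have h7 := (isBigO_refl (fun s : ℝ => Real.Gamma s ^ d) atTop).mul_isLittleO h6
  refine h7.congr ?_ ?_ <;> intro s <;> simp only [gk]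
  · have : (N' : ℝ) ^ s ≠ 0 := by positivity
    field_simp
  · ring

theorem gk_lex (n : ℕ) (hn : 1 ≤ n) (d N A B d' N' A' B' : ℕ) (hN : 0 < N) (hN' : 0 < N')
    (h : toLex (d, toLex (OrderDual.toDual N, toLex (A, B))) <
      toLex (d', toLex (OrderDual.toDual N', toLex (A', B')))) :
    gk n d N A B =o[atTop] gk n d' N' A' B' := by
  rw [Prod.Lex.toLex_lt_toLex] at h
  rcases h with h | ⟨h1, h⟩
  · exact gk_lt_d n d d' N N' A A' B B' hn hN hN' h
  simp only at h1 h
  subst h1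
  rw [Prod.Lex.toLex_lt_toLex] at h
  rcases h with h | ⟨h1, h⟩
  · exact gk_lt_N n d N N' A A' B B' hn hN' (OrderDual.toDual_lt_toDual.1 h)
  simp only at h1 h
  have h1 : N = N' := OrderDual.toDual.injective h1
  subst h1
  rw [Prod.Lex.toLex_lt_toLex] at h
  rcases h with h | ⟨h1, h⟩
  · exact gk_lt_A n d N A A' B B' hn h
  simp only at h1 h
  subst h1
  exact gk_lt_B n d N A B B' hn h

lemma gk_ne (n d N A B : ℕ) (hn : 1 ≤ n) (hN : 0 < N) : ∀ᶠ s in atTop, gk n d N A B s ≠ 0 := by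
  filter_upwards [eventually_gt_atTop 0, (wf_lower n hn).eventually_gt_atTop 0] with s h1 h2
  have h3 := Real.Gamma_pos_of_pos h1
  have h4 : (0 : ℝ) < N := by exact_mod_cast hN
  unfold gk
  positivity

lemma decomp (M : ℕ) (P : MvPolynomial (Fin M ⊕ Fin 2) (Polynomial ℂ)) (hP : P ≠ 0) :
    ∃ (J : Finset (ℕ × ℕ × ℕ)) (q : ℕ × ℕ × ℕ → MvPolynomial (Fin M) ℂ),
      J.Nonempty ∧ (∀ κ ∈ J, q κ ≠ 0) ∧ ∀ (z : ℂ) (u : Fin M → ℂ) (v : Fin 2 → ℂ),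
        eval₂ (Polynomial.evalRingHom z) (Sum.elim u v) P =
          ∑ κ ∈ J, eval u (q κ) * v 0 ^ κ.1 * v 1 ^ κ.2.1 * z ^ κ.2.2 := by
  classical
  let K := P.support.sup (fun e => (coeff e P).natDegree) + 1
  let I := P.support ×ˢ Finset.range K
  let τ : ((Fin M ⊕ Fin 2) →₀ ℕ) × ℕ → ℕ × ℕ × ℕ := fun i => (i.1 (Sum.inr 0), i.1 (Sum.inr 1), i.2)
  let l : ((Fin M ⊕ Fin 2) →₀ ℕ) → (Fin M →₀ ℕ) := fun e =>
    Finsupp.equivFunOnFinite.symm (fun k => e (Sum.inl k))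
  let q : ℕ × ℕ × ℕ → MvPolynomial (Fin M) ℂ := fun κ =>
    ∑ i ∈ I with τ i = κ, monomial (l i.1) ((coeff i.1 P).coeff i.2)
  have hK : ∀ e ∈ P.support, (coeff e P).natDegree < K := fun e he =>
    Nat.lt_succ_of_le (Finset.le_sup (f := fun e => (coeff e P).natDegree) he)
  refine ⟨(I.image τ).filter (fun κ => q κ ≠ 0), q, ?_, fun κ h => (Finset.mem_filter.1 h).2, ?_⟩
  · obtain ⟨e, he⟩ := Finset.nonempty_iff_ne_empty.2 (fun h => hP (support_eq_empty.1 h))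
    have heI : (e, (coeff e P).natDegree) ∈ I :=
      Finset.mem_product.2 ⟨he, Finset.mem_range.2 (hK e he)⟩
    refine ⟨τ (e, (coeff e P).natDegree), Finset.mem_filter.2 ⟨Finset.mem_image_of_mem _ heI, ?_⟩⟩
    intro h0
    have h1 := congrArg (coeff (l e)) h0
    simp only [q, coeff_sum, coeff_monomial, coeff_zero] at h1
    rw [Finset.sum_eq_single (e, (coeff e P).natDegree)] at h1
    · rw [if_pos rfl] at h1
      exact mem_support_iff.1 he (Polynomial.leadingCoeff_eq_zero.1 h1)
    · rintro ⟨e', A⟩ h2 h3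
      rw [if_neg]
      intro h4
      apply h3
      have h5 := (Finset.mem_filter.1 h2).2
      simp only [τ, Prod.mk.injEq] at h5
      rw [Prod.mk.injEq]
      refine ⟨?_, h5.2.2⟩
      ext x
      rcases x with k | j
      · exact DFunLike.congr_fun h4 k
      · fin_cases j
        · exact h5.1
        · exact h5.2.1
    · intro h
      exact (h (Finset.mem_filter.2 ⟨heI, rfl⟩)).elim
  · intro z u v
    rw [Finset.sum_filter_of_ne (p := fun κ => q κ ≠ 0) (by
      intro κ _ h h0
      apply h
      rw [h0]; simp)]
    have h1 : eval₂ (Polynomial.evalRingHom z) (Sum.elim u v) P =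
        ∑ i ∈ I, eval u (monomial (l i.1) ((coeff i.1 P).coeff i.2)) * v 0 ^ (τ i).1 *
          v 1 ^ (τ i).2.1 * z ^ (τ i).2.2 := by
      rw [eval₂_eq', Finset.sum_product]
      refine Finset.sum_congr rfl fun e he => ?_
      rw [Polynomial.coe_evalRingHom, Polynomial.eval_eq_sum_range' (hK e he), Finset.sum_mul]
      refine Finset.sum_congr rfl fun A _ => ?_
      rw [Fintype.prod_sum_type, Fin.prod_univ_two, eval_monomial,
        Finsupp.prod_fintype _ _ (fun _ => pow_zero _)]
      simp only [Sum.elim_inl, Sum.elim_inr, τ, l, Finsupp.equivFunOnFinite_symm_apply_apply]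
      ring
    rw [h1, ← Finset.sum_fiberwise_of_maps_to (g := τ) (t := I.image τ)
      (fun i hi => Finset.mem_image_of_mem _ hi)]
    refine Finset.sum_congr rfl fun κ _ => ?_
    simp only [q, map_sum, Finset.sum_mul]
    refine Finset.sum_congr rfl fun i hi => ?_
    rw [(Finset.mem_filter.1 hi).2]


/-- **The `ℓ = 1` case.** If `P(u₀,…,u_m; v₀,v₁)` is a polynomial with polynomial
coefficients in `z` such that `P(ζ(z),…,ζ^{(m)}(z); Γ(z), Γ^{(n)}(z)) = 0` for all
`z ≠ 1` not a nonpositive integer, then `P = 0`. -/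
theorem zeta_gamma_independence_one_derivative (m n : ℕ) (hn : 1 ≤ n)
    (P : MvPolynomial (Fin (m + 1) ⊕ Fin 2) (Polynomial ℂ))
    (hP : ∀ z : ℂ, z ≠ 1 → (∀ k : ℕ, z ≠ -(k : ℂ)) →
      MvPolynomial.eval₂ (Polynomial.evalRingHom z)
        (Sum.elim (fun i : Fin (m + 1) => iteratedDeriv (i : ℕ) riemannZeta z)
          (fun j : Fin 2 => iteratedDeriv (![0, n] j) Complex.Gamma z)) P = 0) :
    P = 0 := by
  classical
  by_contra hP0
  obtain ⟨J, q, hJ, hq, hdec⟩ := decomp (m + 1) P hP0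
  have hlead : ∀ κ : ℕ × ℕ × ℕ, ∃ N : ℕ, 0 < N ∧ (κ ∈ J → ∃ c : ℂ, c ≠ 0 ∧
      Tendsto (fun x : ℝ => (N : ℂ) ^ (x : ℂ) *
        eval (fun k : Fin (m + 1) => iteratedDeriv k riemannZeta x) (q κ)) atTop (𝓝 c)) := by
    intro κ
    by_cases h : κ ∈ J
    · obtain ⟨N, h1, h2⟩ := leading (m + 1) (q κ) (hq κ h)
      exact ⟨N, h1, fun _ => h2⟩
    · exact ⟨1, one_pos, fun h' => absurd h' h⟩
  choose N hN hlim using hlead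
  let term : ℕ × ℕ × ℕ → ℝ → ℂ := fun κ s =>
    eval (fun k : Fin (m + 1) => iteratedDeriv k riemannZeta s) (q κ) *
      Complex.Gamma s ^ κ.1 * iteratedDeriv n Complex.Gamma s ^ κ.2.1 * (s : ℂ) ^ κ.2.2
  have hsum : ∀ᶠ s : ℝ in atTop, ∑ κ ∈ J, term κ s = 0 := by
    filter_upwards [eventually_gt_atTop 1] with s hs
    have h1 := hP s (by exact_mod_cast hs.ne') (by
      intro k hk
      have : s = -(k : ℝ) := by exact_mod_cast hk
      have h0 : (0 : ℝ) ≤ k := Nat.cast_nonneg k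
      linarith)
    rw [hdec] at h1
    simpa [term, iteratedDeriv_zero] using h1
  let G : ℕ × ℕ × ℕ → ℝ → ℝ := fun κ => gk n (κ.1 + κ.2.1) (N κ) κ.2.2 κ.2.1
  have htheta : ∀ κ ∈ J, term κ =Θ[atTop] G κ := by
    intro κ hκ
    obtain ⟨c, hc, ht⟩ := hlim κ hκ
    have h1 : (fun x : ℝ => (N κ : ℂ) ^ (x : ℂ) *
        eval (fun k : Fin (m + 1) => iteratedDeriv k riemannZeta x) (q κ)) =Θ[atTop]
        (fun _ => (1 : ℝ)) :=
      (isTheta_of_div_tendsto_nhds_ne_zero (f := fun _ => (1 : ℂ)) (by simpa using ht) hc).symm.trans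
        (isTheta_const_const one_ne_zero one_ne_zero)
    have h2 : (fun s : ℝ => ((G κ s : ℝ) : ℂ)) =Θ[atTop] G κ := by
      rw [← isTheta_norm_left]
      simp only [Complex.norm_real]
      exact isTheta_norm_left.2 (isTheta_refl _ _)
    have h3 := h1.mul h2
    simp only [one_mul] at h3
    refine IsTheta.trans (EventuallyEq.isTheta ?_) h3
    filter_upwards [eventually_gt_atTop 1] with s hs
    have hG : Real.Gamma s ≠ 0 := (Real.Gamma_pos_of_pos (by linarith)).ne'
    have hJw : Jf n s = Real.Gamma s * wf n s := by
      rw [wf]; field_simp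
    have hNr : (0 : ℝ) < N κ := by exact_mod_cast hN κ
    have hNs : (((N κ : ℝ) ^ s : ℝ) : ℂ) ≠ 0 := by
      exact_mod_cast (Real.rpow_pos_of_pos hNr s).ne'
    have hNc : (N κ : ℂ) ^ (s : ℂ) = (((N κ : ℝ) ^ s : ℝ) : ℂ) := by
      rw [Complex.ofReal_cpow hNr.le]; simp
    simp only [term, G, gk]
    rw [iter_Gamma_real n s hs, hJw, Complex.Gamma_ofReal, hNc]
    push_cast
    field_simp
    ring
  obtain ⟨κ₀, hκ₀, hmax⟩ := Finset.exists_max_image J (fun κ =>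
    toLex (κ.1 + κ.2.1, toLex (OrderDual.toDual (N κ), toLex (κ.2.2, κ.2.1)))) hJ
  have hlit : ∀ κ ∈ J.erase κ₀, term κ =o[atTop] term κ₀ := by
    intro κ hκ
    obtain ⟨hne, hκJ⟩ := Finset.mem_erase.1 hκ
    have hlt := lt_of_le_of_ne (hmax κ hκJ) (by
      intro h
      apply hne
      have h' := toLex.injective h
      simp only [Prod.mk.injEq] at h'
      have h2 := toLex.injective h'.2
      simp only [Prod.mk.injEq] at h2
      have h3 := toLex.injective h2.2
      simp only [Prod.mk.injEq] at h3
      ext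
      · omega
      · exact h3.2
      · exact h3.1)
    have := gk_lex n hn _ _ _ _ _ _ _ _ (hN κ) (hN κ₀) hlt
    exact ((htheta κ hκJ).isBigO.trans_isLittleO this).trans_isBigO (htheta κ₀ hκ₀).symm.isBigO
  have hself : term κ₀ =o[atTop] term κ₀ := by
    have h1 : (fun s => ∑ κ ∈ J.erase κ₀, term κ s) =o[atTop] term κ₀ := IsLittleO.fun_sum hlit
    refine h1.neg_left.congr' ?_ EventuallyEq.rfl
    filter_upwards [hsum] with s hs
    rw [← Finset.add_sum_erase J _ hκ₀] at hs
    exact (eq_neg_of_add_eq_zero_left hs).symm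
  refine isLittleO_irrefl ?_ hself
  apply Eventually.frequently
  have h1 := gk_ne n (κ₀.1 + κ₀.2.1) (N κ₀) κ₀.2.2 κ₀.2.1 hn (hN κ₀)
  have h2 := (htheta κ₀ hκ₀).symm.isBigO.eq_zero_imp
  filter_upwards [h1, h2] with s h3 h4 h5
  exact h3 (h4 h5)
end
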